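/- arXiv:1612.07607 — 7 statements merged into one kernel-verified Lean document; each statement's English description precedes it below -/
import Mathlib

section
/- Let ρ be a bipartite state on ℂ^{dA}⊗ℂ^{dB}, β a unit vector in ℂ^{dB}, and p > 0. Suppose there is an effect E on ℂ^{dA} with Tr_A[ρ(E⊗I_B)] = p|β⟩⟨β|, and p is the maximal steering probability for the steered state |β⟩⟨β|: for every effect F and every q ≥ 0 with Tr_A[ρ(F⊗I_B)] = q|β⟩⟨β| one has q ≤ p. Then there exist m ≤ dA and orthonormal vectors α_1,…,α_m in ℂ^{dA} such that Σ_{i=1}^m Tr_A[ρ(|α_i⟩⟨α_i|⊗I_B)] = p|β⟩⟨β|. (Non-degenerate projective measurements are as efficient as general POVM effects for producing pure steered states.) -/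
/-!
The proof diagonalises the effect, `E = ∑ i, λ i • |αᵢ⟩⟨αᵢ|` with `0 ≤ λ i ≤ 1`, so that
`p • |β⟩⟨β| = ∑ i, λ i • Mᵢ` where `Mᵢ` is the positive semidefinite conditional state of `αᵢ`.
A positive semidefinite matrix occurring with positive weight in a decomposition of a multiple of
`|β⟩⟨β|` is itself a nonnegative multiple of `|β⟩⟨β|` (`mulVec_eq_zero_of_sum`, `eq_smul_proj`), so
`Mᵢ = cᵢ • |β⟩⟨β|` whenever `λ i > 0`.
The spectral projection `F = ∑_{λ i > 0} |αᵢ⟩⟨αᵢ|` is an effect which steers to `|β⟩⟨β|` with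
probability `∑_{λ i > 0} cᵢ ≥ ∑ λ i cᵢ = p`, and maximality of `p` forces equality. The
eigenvectors with positive eigenvalue are therefore the required orthonormal family.
-/

open scoped BigOperators Kronecker Classical ComplexOrder

namespace EPR

noncomputable section

/-- Complex inner product `⟨u, v⟩ = ∑ conj (u a) * v a` (conjugate-linear in the first slot). -/
def cinner {ι : Type*} [Fintype ι] (u v : ι → ℂ) : ℂ :=
  ∑ a, (starRingEnd ℂ) (u a) * v a

/-- `u` is a unit vector. -/
def IsUnitVec {ι : Type*} [Fintype ι] (u : ι → ℂ) : Prop := cinner u u = 1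

/-- Rank-one projection `|u⟩⟨u|`, with entries `u k * conj (u l)`. -/
def proj {ι : Type*} [Fintype ι] (u : ι → ℂ) : Matrix ι ι ℂ :=
  Matrix.of fun k l => u k * (starRingEnd ℂ) (u l)

/-- Rank-one operator `|u⟩⟨v|`, with entries `u k * conj (v l)`. -/
def outer {ι : Type*} [Fintype ι] (u v : ι → ℂ) : Matrix ι ι ℂ :=
  Matrix.of fun k l => u k * (starRingEnd ℂ) (v l)

/-- A state: positive semidefinite matrix of trace 1. -/
def IsState {ι : Type*} [Fintype ι] (ρ : Matrix ι ι ℂ) : Prop :=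
  ρ.PosSemidef ∧ ρ.trace = 1

/-- An effect: `0 ≤ E ≤ I` in the Loewner order. -/
def IsEffect {d : ℕ} (E : Matrix (Fin d) (Fin d) ℂ) : Prop :=
  E.PosSemidef ∧ (1 - E).PosSemidef

/-- Conditional state `Tr_A[ρ (E ⊗ I_B)]` of a bipartite state for an effect `E` on A:
entries `(E')_{b b'} = ∑_{a,a'} E_{a' a} ρ_{(a,b),(a',b')}`. -/
def condStateE {dA dB : ℕ} (ρ : Matrix (Fin dA × Fin dB) (Fin dA × Fin dB) ℂ)
    (E : Matrix (Fin dA) (Fin dA) ℂ) : Matrix (Fin dB) (Fin dB) ℂ :=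
  Matrix.of fun b b' => ∑ a, ∑ a', E a' a * ρ (a, b) (a', b')

/-- Conditional state `Tr_A[ρ (|α⟩⟨α| ⊗ I_B)]` for a non-degenerate projective effect:
entries `∑_{a,a'} conj (α a) * α a' * ρ_{(a,b),(a',b')}`. -/
def condState {dA dB : ℕ} (ρ : Matrix (Fin dA × Fin dB) (Fin dA × Fin dB) ℂ)
    (α : Fin dA → ℂ) : Matrix (Fin dB) (Fin dB) ℂ :=
  Matrix.of fun b b' => ∑ a, ∑ a', (starRingEnd ℂ) (α a) * α a' * ρ (a, b) (a', b')

/-- Tensor product vector `α ⊗ β` in `ℂ^{dA} ⊗ ℂ^{dB}`. -/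
def tensor2 {dA dB : ℕ} (α : Fin dA → ℂ) (β : Fin dB → ℂ) : Fin dA × Fin dB → ℂ :=
  fun p => α p.1 * β p.2

/-- Tensor product vector `α ⊗ β ⊗ γ` in `ℂ^{dA} ⊗ ℂ^{dB} ⊗ ℂ^{dC}`. -/
def tensor3 {dA dB dC : ℕ} (α : Fin dA → ℂ) (β : Fin dB → ℂ) (γ : Fin dC → ℂ) :
    Fin dA × Fin dB × Fin dC → ℂ :=
  fun p => α p.1 * β p.2.1 * γ p.2.2

/-- Reduced state of a tripartite pure state on AB:
`(ρ_Ψ)_{(a,b),(a',b')} = ∑_c Ψ_{a,b,c} conj (Ψ_{a',b',c})`. -/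
def reducedAB {dA dB dC : ℕ} (Ψ : Fin dA × Fin dB × Fin dC → ℂ) :
    Matrix (Fin dA × Fin dB) (Fin dA × Fin dB) ℂ :=
  Matrix.of fun p q => ∑ c, Ψ (p.1, p.2, c) * (starRingEnd ℂ) (Ψ (q.1, q.2, c))

/-- Partial contraction `⟨α|Ψ⟩ ∈ ℂ^{dB} ⊗ ℂ^{dC}`, with components
`∑_a conj (α a) Ψ_{a,b,c}`. -/
def aContract {dA dB dC : ℕ} (α : Fin dA → ℂ) (Ψ : Fin dA × Fin dB × Fin dC → ℂ) :
    Fin dB × Fin dC → ℂ :=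
  fun p => ∑ a, (starRingEnd ℂ) (α a) * Ψ (a, p.1, p.2)

/-- A family of vectors is orthonormal. For `n = d` this is an orthonormal basis of `ℂ^d`. -/
def OrthonormalFam {d n : ℕ} (α : Fin n → Fin d → ℂ) : Prop :=
  ∀ i j, cinner (α i) (α j) = if i = j then 1 else 0

/-- `ρ` is unsteerable from Alice's side for non-degenerate projective measurements:
there is a finite local-hidden-state ensemble reproducing all conditional states of
every non-degenerate projective measurement (orthonormal basis) on A. -/
def Unsteerable {dA dB : ℕ} (ρ : Matrix (Fin dA × Fin dB) (Fin dA × Fin dB) ℂ) : Prop :=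
  ∃ (n : ℕ) (P : Fin n → ℝ) (σ : Fin n → Matrix (Fin dB) (Fin dB) ℂ),
    (∀ ξ, 0 ≤ P ξ) ∧ (∑ ξ, P ξ = 1) ∧ (∀ ξ, IsState (σ ξ)) ∧
    ∀ α : Fin dA → Fin dA → ℂ, OrthonormalFam α →
      ∃ Q : Fin dA → Fin n → ℝ,
        (∀ a ξ, 0 ≤ Q a ξ ∧ Q a ξ ≤ 1) ∧ (∀ ξ, ∑ a, Q a ξ = 1) ∧
        ∀ a, condState ρ (α a) = ∑ ξ, ((Q a ξ * P ξ : ℝ) : ℂ) • σ ξ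

/-- `ρ` is separable: a finite convex-type combination of product states. -/
def Separable {dA dB : ℕ} (ρ : Matrix (Fin dA × Fin dB) (Fin dA × Fin dB) ℂ) : Prop :=
  ∃ (n : ℕ) (q : Fin n → ℝ) (ρA : Fin n → Matrix (Fin dA) (Fin dA) ℂ)
    (ρB : Fin n → Matrix (Fin dB) (Fin dB) ℂ),
    (∀ k, 0 ≤ q k) ∧ (∀ k, IsState (ρA k)) ∧ (∀ k, IsState (ρB k)) ∧
    ρ = ∑ k, ((q k : ℂ)) • (ρA k ⊗ₖ ρB k)

/-- A local hidden state model for an assemblage `As`, with outcomes `A`, measurement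
labels `X`, hidden states `σ` with weights `P`, and response probabilities `R`. -/
def LHSModel {dB : ℕ} {A X : Type*} [Fintype A] {n : ℕ}
    (As : A → X → Matrix (Fin dB) (Fin dB) ℂ)
    (P : Fin n → ℝ) (σ : Fin n → Matrix (Fin dB) (Fin dB) ℂ)
    (R : A → X → Fin n → ℝ) : Prop :=
  (∀ ξ, 0 ≤ P ξ) ∧ (∑ ξ, P ξ = 1) ∧ (∀ ξ, IsState (σ ξ)) ∧
  (∀ a x ξ, 0 ≤ R a x ξ ∧ R a x ξ ≤ 1) ∧ (∀ x ξ, ∑ a, R a x ξ = 1) ∧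
  (∀ a x, As a x = ∑ ξ, ((R a x ξ * P ξ : ℝ) : ℂ) • σ ξ)

/-- Standard basis vector of `ℂ^d`. -/
def stdb {d : ℕ} (a : Fin d) : Fin d → ℂ := fun i => if i = a then 1 else 0

open Matrix

lemma proj_eq_vecMulVec {ι : Type*} [Fintype ι] (u : ι → ℂ) : proj u = vecMulVec u (star u) := by
  ext i j; simp [proj, vecMulVec_apply]

lemma cinner_eq_dotProduct {ι : Type*} [Fintype ι] (u v : ι → ℂ) : cinner u v = star u ⬝ᵥ v := by
  simp [cinner, dotProduct]

lemma posSemidef_proj {ι : Type*} [Fintype ι] (u : ι → ℂ) : (proj u).PosSemidef := by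
  rw [proj_eq_vecMulVec]; exact posSemidef_vecMulVec_self_star u

lemma proj_mulVec {ι : Type*} [Fintype ι] (u x : ι → ℂ) : proj u *ᵥ x = cinner u x • u := by
  rw [proj_eq_vecMulVec, cinner_eq_dotProduct, vecMulVec_mulVec]
  ext i; simp [mul_comm]

/-- The conditional state is the compression `Vᴴ ρ V` along `V = α ⊗ I_B`. -/
lemma condState_posSemidef {dA dB : ℕ} {ρ : Matrix (Fin dA × Fin dB) (Fin dA × Fin dB) ℂ}
    (hρ : ρ.PosSemidef) (α : Fin dA → ℂ) : (condState ρ α).PosSemidef := by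
  have h := hρ.conjTranspose_mul_mul_same
    (Matrix.of fun (x : Fin dA × Fin dB) (b : Fin dB) => if x.2 = b then α x.1 else 0)
  convert h using 1
  ext b b'
  simp only [condState, of_apply, mul_apply, conjTranspose_apply, Fintype.sum_prod_type]
  simp only [apply_ite star, star_zero, ite_mul, mul_ite, zero_mul, mul_zero,
    Finset.sum_ite_eq', Finset.mem_univ, if_true, Finset.sum_mul]
  rw [Finset.sum_comm]
  refine Finset.sum_congr rfl fun a' _ => Finset.sum_congr rfl fun a _ => ?_
  simp only [RCLike.star_def]
  ring

lemma condStateE_sum {dA dB : ℕ} (ρ : Matrix (Fin dA × Fin dB) (Fin dA × Fin dB) ℂ)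
    {ι : Type*} (s : Finset ι) (w : ι → ℂ) (α : ι → Fin dA → ℂ) :
    condStateE ρ (∑ i ∈ s, w i • proj (α i)) = ∑ i ∈ s, w i • condState ρ (α i) := by
  ext b b'
  simp only [condStateE, condState, proj, of_apply, Matrix.sum_apply, Matrix.smul_apply,
    smul_eq_mul, Finset.sum_mul, Finset.mul_sum]
  conv_rhs => rw [Finset.sum_comm]
  refine Finset.sum_congr rfl fun a _ => ?_
  rw [Finset.sum_comm]
  refine Finset.sum_congr rfl fun i _ => Finset.sum_congr rfl fun a' _ => ?_
  ring

/-- A vector orthogonal to `β` is annihilated by every positively weighted summand of a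
decomposition of a multiple of `|β⟩⟨β|` into positive semidefinite matrices. -/
lemma mulVec_eq_zero_of_sum {ι κ : Type*} [Fintype ι] [Fintype κ] {β : κ → ℂ} {p : ℂ}
    {w : ι → ℝ} (hw : ∀ i, 0 ≤ w i) {M : ι → Matrix κ κ ℂ} (hM : ∀ i, (M i).PosSemidef)
    (hsum : ∑ i, (w i : ℂ) • M i = p • proj β) {i : ι} (hi : 0 < w i)
    {v : κ → ℂ} (hv : cinner β v = 0) : M i *ᵥ v = 0 := by
  have h0 : ∑ j, (w j : ℂ) * (star v ⬝ᵥ (M j *ᵥ v)) = 0 := by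
    have := congrArg (fun N : Matrix κ κ ℂ => star v ⬝ᵥ (N *ᵥ v)) hsum
    simpa [sum_mulVec, smul_mulVec, dotProduct_sum, proj_mulVec, hv] using this
  have h1 := (Finset.sum_eq_zero_iff_of_nonneg (fun j _ =>
    mul_nonneg (by exact_mod_cast hw j) ((hM j).dotProduct_mulVec_nonneg v))).1 h0 i
      (Finset.mem_univ i)
  have hi' : (w i : ℂ) ≠ 0 := by exact_mod_cast hi.ne'
  exact ((hM i).dotProduct_mulVec_zero_iff v).1 ((mul_eq_zero.1 h1).resolve_left hi')

/-- A positive semidefinite matrix vanishing on the orthogonal complement of the unit vector `β`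
is a nonnegative multiple of `|β⟩⟨β|`. -/
lemma eq_smul_proj {κ : Type*} [Fintype κ] {β : κ → ℂ} (hβ : IsUnitVec β)
    {M : Matrix κ κ ℂ} (hM : M.PosSemidef) (h : ∀ v, cinner β v = 0 → M *ᵥ v = 0) :
    ∃ c : ℝ, 0 ≤ c ∧ M = (c : ℂ) • proj β := by
  have hβ' : star β ⬝ᵥ β = 1 := by rw [← cinner_eq_dotProduct]; exact hβ
  have hMx : ∀ x, M *ᵥ x = cinner β x • M *ᵥ β := fun x => by
    have := h (x - cinner β x • β) (by
      simp only [cinner_eq_dotProduct, dotProduct_sub, dotProduct_smul, hβ']; simp)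
    rw [mulVec_sub, mulVec_smul, sub_eq_zero] at this
    exact this
  have hMP : M = M * proj β := by
    refine Matrix.ext_of_mulVec_single fun k => ?_
    rw [hMx, ← mulVec_mulVec, proj_mulVec, mulVec_smul]
  have hPM : M = proj β * M := by
    have := congrArg conjTranspose hMP
    rwa [conjTranspose_mul, hM.1.eq, (posSemidef_proj β).1.eq] at this
  have hnn := hM.dotProduct_mulVec_nonneg β
  obtain ⟨c, hc⟩ : ∃ c : ℝ, (c : ℂ) = star β ⬝ᵥ (M *ᵥ β) :=
    ⟨_, Complex.ext rfl (Complex.nonneg_iff.1 hnn).2⟩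
  refine ⟨c, by rw [← hc] at hnn; exact_mod_cast hnn, ?_⟩
  refine Matrix.ext_of_mulVec_single fun k => ?_
  conv_lhs => rw [hPM]
  rw [← mulVec_mulVec, hMx, mulVec_smul, proj_mulVec, smul_mulVec, proj_mulVec,
    cinner_eq_dotProduct β (M *ᵥ β), ← hc, smul_comm]

/-- Spectral decomposition of an effect over an orthonormal basis of eigenvectors. -/
lemma effect_spectral {d : ℕ} {E : Matrix (Fin d) (Fin d) ℂ} (hE : IsEffect E) :
    ∃ (w : Fin d → ℝ) (α : Fin d → Fin d → ℂ), OrthonormalFam α ∧ (∀ i, 0 ≤ w i ∧ w i ≤ 1) ∧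
      ∑ i, proj (α i) = 1 ∧ E = ∑ i, (w i : ℂ) • proj (α i) := by
  have hH := hE.1.1
  set U : Matrix (Fin d) (Fin d) ℂ := (hH.eigenvectorUnitary : Matrix (Fin d) (Fin d) ℂ) with hU
  have h1 : star U * U = 1 := Unitary.coe_star_mul_self hH.eigenvectorUnitary
  have h2 : U * star U = 1 := Unitary.coe_mul_star_self hH.eigenvectorUnitary
  have horth : OrthonormalFam (fun i a => U a i) := fun i j => by
    have := congrFun (congrFun h1 i) j
    simpa [mul_apply, star_apply, one_apply, cinner] using this
  have hdec : E = ∑ i, (hH.eigenvalues i : ℂ) • proj (fun a => U a i) := by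
    have hs := hH.spectral_theorem
    rw [Unitary.conjStarAlgAut_apply] at hs
    ext k l
    have := congrFun (congrFun hs k) l
    rw [this, mul_apply]
    simp only [Matrix.sum_apply, Matrix.smul_apply, proj, of_apply, mul_diagonal, ← hU,
      star_apply, Function.comp, smul_eq_mul]
    refine Finset.sum_congr rfl fun i _ => ?_
    simp only [RCLike.star_def, Complex.coe_algebraMap]
    ring_nf
  refine ⟨hH.eigenvalues, fun i a => U a i, horth,
    fun i => ⟨hE.1.eigenvalues_nonneg i, ?_⟩, ?_, hdec⟩
  · have hnn := hE.2.dotProduct_mulVec_nonneg (fun a => U a i)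
    have hEi : E *ᵥ (fun a => U a i) = (hH.eigenvalues i : ℂ) • (fun a => U a i) := by
      conv_lhs => rw [hdec]
      simp only [sum_mulVec, smul_mulVec, proj_mulVec, horth _ _]
      simp
    rw [sub_mulVec, hEi, one_mulVec, dotProduct_sub, dotProduct_smul, ← cinner_eq_dotProduct,
      horth i i] at hnn
    simp only [if_true, smul_eq_mul, mul_one, sub_nonneg] at hnn
    exact_mod_cast hnn
  · ext k l
    have := congrFun (congrFun h2 k) l
    simpa [mul_apply, star_apply, Matrix.sum_apply, proj] using this

/-- if an effect `E` steers Bob to the pure state `|β⟩⟨β|` with maximal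
probability `p`, then the same conditional state is obtained by accumulating `m ≤ dA`
orthonormal rank-one (non-degenerate projective) effects. -/
theorem stmt0 {dA dB : ℕ} (ρ : Matrix (Fin dA × Fin dB) (Fin dA × Fin dB) ℂ)
    (hρ : IsState ρ) (β : Fin dB → ℂ) (hβ : IsUnitVec β) (p : ℝ) (hp : 0 < p)
    (E : Matrix (Fin dA) (Fin dA) ℂ) (hE : IsEffect E)
    (hEβ : condStateE ρ E = (p : ℂ) • proj β)
    (hmax : ∀ (F : Matrix (Fin dA) (Fin dA) ℂ) (q : ℝ), IsEffect F → 0 ≤ q →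
      condStateE ρ F = (q : ℂ) • proj β → q ≤ p) :
    ∃ m : ℕ, m ≤ dA ∧ ∃ α : Fin m → Fin dA → ℂ, OrthonormalFam α ∧
      (∑ i, condState ρ (α i)) = (p : ℂ) • proj β := by
  obtain ⟨w, α, horth, hw, hone, hdec⟩ := effect_spectral hE
  have hM := fun i => condState_posSemidef hρ.1 (α i)
  have hsum : ∑ i, (w i : ℂ) • condState ρ (α i) = (p : ℂ) • proj β := by
    rw [← condStateE_sum, ← hdec, hEβ]
  have hc : ∀ i, ∃ c : ℝ, 0 ≤ c ∧ (0 < w i → condState ρ (α i) = (c : ℂ) • proj β) := fun i => by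
    by_cases hi : 0 < w i
    · obtain ⟨c, h0, h1⟩ := eq_smul_proj hβ (hM i) fun v hv =>
        mulVec_eq_zero_of_sum (fun j => (hw j).1) hM hsum hi hv
      exact ⟨c, h0, fun _ => h1⟩
    · exact ⟨0, le_rfl, fun h => absurd h hi⟩
  choose c hc0 hc1 using hc
  set S : Finset (Fin dA) := Finset.univ.filter fun i => 0 < w i with hS
  have hSsum : ∑ i ∈ S, condState ρ (α i) = ((∑ i ∈ S, c i : ℝ) : ℂ) • proj β := by
    push_cast
    rw [Finset.sum_smul]
    exact Finset.sum_congr rfl fun i hi => hc1 i (Finset.mem_filter.1 hi).2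
  have hPβ : star β ⬝ᵥ (proj β *ᵥ β) = 1 := by
    rw [proj_mulVec, dotProduct_smul, ← cinner_eq_dotProduct, show cinner β β = 1 from hβ]
    simp
  have hpc : p = ∑ i ∈ S, w i * c i := by
    have h1 : (p : ℂ) • proj β = ((∑ i ∈ S, w i * c i : ℝ) : ℂ) • proj β := by
      rw [← hsum]
      push_cast
      rw [Finset.sum_smul, hS, Finset.sum_filter]
      refine Finset.sum_congr rfl fun i _ => ?_
      split_ifs with hi
      · rw [hc1 i hi, smul_smul]
      · simp [le_antisymm (not_lt.1 hi) (hw i).1]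
    have h2 := congrArg (fun N : Matrix (Fin dB) (Fin dB) ℂ => star β ⬝ᵥ (N *ᵥ β)) h1
    simp only [smul_mulVec, dotProduct_smul, hPβ, smul_eq_mul, mul_one] at h2
    exact_mod_cast h2
  have hle : p ≤ ∑ i ∈ S, c i := by
    rw [hpc]
    exact Finset.sum_le_sum fun i _ => mul_le_of_le_one_left (hc0 i) (hw i).2
  have hge : ∑ i ∈ S, c i ≤ p := by
    refine hmax (∑ i ∈ S, proj (α i)) _ ⟨?_, ?_⟩ (Finset.sum_nonneg fun i _ => hc0 i) ?_
    · exact posSemidef_sum _ fun i _ => posSemidef_proj _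
    · rw [← hone, ← Finset.sum_add_sum_compl S, add_sub_cancel_left]
      exact posSemidef_sum _ fun i _ => posSemidef_proj _
    · have := condStateE_sum ρ S (fun _ => 1) α
      simp only [one_smul] at this
      rw [this, hSsum]
  refine ⟨S.card, by simpa using S.card_le_univ, fun k => α (S.equivFin.symm k), ?_, ?_⟩
  · intro i j
    rw [horth]
    simp
  · rw [Equiv.sum_comp S.equivFin.symm (fun i : S => condState ρ (α i)),
      Finset.sum_coe_sort S (fun i => condState ρ (α i)), hSsum, le_antisymm hge hle]

end

end EPR
end

section
/- Let Ψ be a unit vector in ℂ^{dA}⊗ℂ^{dB}⊗ℂ^{dC} with reduced state ρ_Ψ on AB, let α_1,…,α_m be orthonormal vectors in ℂ^{dA}, β a unit vector in ℂ^{dB}, and p > 0. If Σ_{i=1}^m Tr_A[ρ_Ψ(|α_i⟩⟨α_i|⊗I_B)] = p|β⟩⟨β|, then there exist unit vectors γ_1,…,γ_m ∈ ℂ^{dC} and complex numbers c_1,…,c_m with Σ_{i=1}^m |c_i|² = p such that Ψ = Σ_{i=1}^m c_i α_i⊗β⊗γ_i + Φ̃, where ⟨α_i|Φ̃⟩ =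 0 for every i. -/
/-!
Write `v i = ⟨α i|Ψ⟩` and let `w i = ⟨β|v i⟩` be its contraction with `β`. The hypothesis says
`∑ i, ∑ c, v i (b, c) * conj (v i (b', c)) = p * β b * conj (β b')`. Its trace gives
`∑ i, ‖v i‖² = p`, and its expectation in `β` gives `∑ i, ‖w i‖² = p`. By Pythagoras
(`sum_residual`) the residuals `v i - β ⊗ w i` have total squared norm `p - p = 0`, so
`v i = β ⊗ w i`. Writing `w i` as a scalar `c i` times a unit vector `γ i` (`exists_unit_smul`)
and putting `Φ = Ψ - ∑ i, c i • α i ⊗ β ⊗ γ i`, orthonormality of the `α i` gives `⟨α i|Φ⟩ = 0`.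
-/

open scoped BigOperators Kronecker Classical ComplexOrder

namespace EPR

noncomputable section

/-- Pythagoras for the component of `x` along the unit vector `β`. -/
lemma sum_residual {ι : Type*} [Fintype ι] (β x : ι → ℂ) (hβ : IsUnitVec β) :
    ∑ b, (x b - β b * cinner β x) * (starRingEnd ℂ) (x b - β b * cinner β x)
      = ∑ b, x b * (starRingEnd ℂ) (x b)
        - cinner β x * (starRingEnd ℂ) (cinner β x) := by
  have hw : (starRingEnd ℂ) (cinner β x) = ∑ b, β b * (starRingEnd ℂ) (x b) := by
    simp [cinner, map_sum]
  have hβ' : ∑ b, (starRingEnd ℂ) (β b) * β b = 1 := hβ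
  have hx : ∑ b, (starRingEnd ℂ) (β b) * x b = cinner β x := rfl
  generalize cinner β x = w at *
  have e : ∀ b, (x b - β b * w) * (starRingEnd ℂ) (x b - β b * w)
      = x b * (starRingEnd ℂ) (x b) - w * (β b * (starRingEnd ℂ) (x b))
        - (starRingEnd ℂ) w * ((starRingEnd ℂ) (β b) * x b)
        + w * (starRingEnd ℂ) w * ((starRingEnd ℂ) (β b) * β b) := by
    intro b
    simp only [map_sub, map_mul]
    ring
  simp only [e, Finset.sum_add_distrib, Finset.sum_sub_distrib, ← Finset.mul_sum]
  rw [← hw, hx, hβ']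
  ring

/-- Polar form of a vector; the index type must be nonempty so that the zero vector also has
a unit vector to go with the scalar `0`. -/
lemma exists_unit_smul {ι : Type*} [Fintype ι] [Nonempty ι] (w : ι → ℂ) :
    ∃ (k : ℂ) (g : ι → ℂ), IsUnitVec g ∧ (∀ j, w j = k * g j) ∧
      (Complex.normSq k : ℂ) = ∑ j, w j * (starRingEnd ℂ) (w j) := by
  obtain ⟨k, g, hg, hw⟩ : ∃ (k : ℂ) (g : ι → ℂ), IsUnitVec g ∧ ∀ j, w j = k * g j := by
    by_cases h0 : w = 0
    · refine ⟨0, Pi.single (Classical.arbitrary ι) 1, ?_, by simp [h0]⟩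
      simp [IsUnitVec, cinner, Pi.single_apply]
    · set N : ℝ := ∑ j, Complex.normSq (w j) with hN
      have hpos : 0 < N := by
        obtain ⟨j, hj⟩ := Function.ne_iff.mp h0
        exact Finset.sum_pos' (fun _ _ => Complex.normSq_nonneg _)
          ⟨j, Finset.mem_univ _, Complex.normSq_pos.mpr hj⟩
      have hs : ((Real.sqrt N : ℝ) : ℂ) ≠ 0 := by
        exact_mod_cast (Real.sqrt_pos.mpr hpos).ne'
      have hsq : ((Real.sqrt N : ℝ) : ℂ) * (Real.sqrt N : ℝ) = N := by
        exact_mod_cast Real.mul_self_sqrt hpos.le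
      refine ⟨(Real.sqrt N : ℝ), fun j => w j / (Real.sqrt N : ℝ), ?_, fun j => by field_simp⟩
      have e : ∀ j, (starRingEnd ℂ) (w j / (Real.sqrt N : ℝ)) * (w j / (Real.sqrt N : ℝ))
          = (Complex.normSq (w j) : ℂ) / N := by
        intro j
        rw [map_div₀, Complex.conj_ofReal, div_mul_div_comm, hsq, mul_comm, Complex.mul_conj]
      have hN0 : (N : ℂ) ≠ 0 := by exact_mod_cast hpos.ne'
      unfold IsUnitVec cinner
      simp only [e, ← Finset.sum_div]
      rw [div_eq_one_iff_eq hN0, hN]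
      push_cast
      rfl
  refine ⟨k, g, hg, hw, ?_⟩
  have hg' : ∑ j, (starRingEnd ℂ) (g j) * g j = 1 := hg
  have e : ∀ j, w j * (starRingEnd ℂ) (w j)
      = (Complex.normSq k : ℂ) * ((starRingEnd ℂ) (g j) * g j) := by
    intro j
    rw [hw, map_mul, ← Complex.mul_conj]
    ring
  simp only [e, ← Finset.mul_sum, hg', mul_one]

/-- `Tr_A[ρ_Ψ (|α⟩⟨α| ⊗ I)]` is the reduced state on B of the vector `⟨α|Ψ⟩`. -/
lemma condState_reducedAB {dA dB dC : ℕ} (Ψ : Fin dA × Fin dB × Fin dC → ℂ) (α : Fin dA → ℂ)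
    (b b' : Fin dB) :
    condState (reducedAB Ψ) α b b'
      = ∑ c, aContract α Ψ (b, c) * (starRingEnd ℂ) (aContract α Ψ (b', c)) := by
  simp only [condState, reducedAB, aContract, Matrix.of_apply, map_sum, map_mul,
    Complex.conj_conj, Finset.sum_mul_sum]
  simp only [Finset.mul_sum]
  conv_rhs => rw [Finset.sum_comm]
  refine Finset.sum_congr rfl fun a _ => ?_
  conv_rhs => rw [Finset.sum_comm]
  exact Finset.sum_congr rfl fun a' _ => Finset.sum_congr rfl fun c _ => by ring

/-- if a sum of conditional states for orthonormal effects `|α_i⟩⟨α_i|`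
equals `p |β⟩⟨β|`, then `Ψ = ∑ c_i α_i⊗β⊗γ_i + Φ` with unit vectors `γ_i`,
`∑ |c_i|² = p`, and `⟨α_i|Φ⟩ = 0` for every `i`. -/
theorem stmt3 {dA dB dC m : ℕ} (Ψ : Fin dA × Fin dB × Fin dC → ℂ) (hΨ : IsUnitVec Ψ)
    (α : Fin m → Fin dA → ℂ) (hα : OrthonormalFam α)
    (β : Fin dB → ℂ) (hβ : IsUnitVec β) (p : ℝ) (hp : 0 < p)
    (h : (∑ i, condState (reducedAB Ψ) (α i)) = (p : ℂ) • proj β) :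
    ∃ (γ : Fin m → Fin dC → ℂ) (c : Fin m → ℂ) (Φ : Fin dA × Fin dB × Fin dC → ℂ),
      (∀ i, IsUnitVec (γ i)) ∧ (∑ i, Complex.normSq (c i)) = p ∧
      Ψ = (∑ i, c i • tensor3 (α i) β (γ i)) + Φ ∧
      ∀ i, aContract (α i) Φ = 0 := by
  have hne : Nonempty (Fin dC) := by
    by_contra hC
    rw [not_nonempty_iff] at hC
    simp [IsUnitVec, cinner] at hΨ
  have hβ' : ∑ b, (starRingEnd ℂ) (β b) * β b = 1 := hβ
  set v : Fin m → Fin dB × Fin dC → ℂ := fun i => aContract (α i) Ψ with hv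
  have H : ∀ b b', ∑ i, ∑ c, v i (b, c) * (starRingEnd ℂ) (v i (b', c))
      = p * (β b * (starRingEnd ℂ) (β b')) := by
    intro b b'
    have := congrFun (congrFun h b) b'
    simpa [Matrix.sum_apply, condState_reducedAB, proj] using this
  let w : Fin m → Fin dC → ℂ := fun i c => cinner β (fun b => v i (b, c))
  have hV : ∑ i, ∑ c, ∑ b, v i (b, c) * (starRingEnd ℂ) (v i (b, c)) = p := by
    calc _ = ∑ b, ∑ i, ∑ c, v i (b, c) * (starRingEnd ℂ) (v i (b, c)) := by
          conv_rhs => rw [Finset.sum_comm]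
          refine Finset.sum_congr rfl fun i _ => ?_
          rw [Finset.sum_comm]
      _ = p * ∑ b, (starRingEnd ℂ) (β b) * β b := by
          rw [Finset.mul_sum]
          exact Finset.sum_congr rfl fun b _ => by rw [H]; ring
      _ = p := by rw [hβ', mul_one]
  have hW : ∑ i, ∑ c, w i c * (starRingEnd ℂ) (w i c) = p := by
    calc _ = ∑ i, ∑ c, ∑ b, ∑ b', (starRingEnd ℂ) (β b) * β b' *
              (v i (b, c) * (starRingEnd ℂ) (v i (b', c))) := by
          refine Finset.sum_congr rfl fun i _ => Finset.sum_congr rfl fun c _ => ?_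
          simp only [w, cinner, map_sum, map_mul, Complex.conj_conj, Finset.sum_mul_sum]
          refine Finset.sum_congr rfl fun b _ => Finset.sum_congr rfl fun b' _ => by ring
      _ = ∑ b, ∑ b', ∑ i, ∑ c, (starRingEnd ℂ) (β b) * β b' *
              (v i (b, c) * (starRingEnd ℂ) (v i (b', c))) := by
          simp only [← Fintype.sum_prod_type']
          let e : (Fin m × Fin dC × Fin dB × Fin dB) ≃ (Fin dB × Fin dB × Fin m × Fin dC) :=
            ⟨fun x => (x.2.2.1, x.2.2.2, x.1, x.2.1),
              fun x => (x.2.2.1, x.2.2.2, x.1, x.2.1), fun _ => rfl, fun _ => rfl⟩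
          exact Fintype.sum_equiv e _ _ fun _ => rfl
      _ = p * ((∑ b, (starRingEnd ℂ) (β b) * β b) * ∑ b, (starRingEnd ℂ) (β b) * β b) := by
          simp only [← Finset.mul_sum, H]
          rw [Finset.sum_mul_sum, Finset.mul_sum]
          refine Finset.sum_congr rfl fun b _ => ?_
          rw [Finset.mul_sum]
          exact Finset.sum_congr rfl fun b' _ => by ring
      _ = p := by rw [hβ', mul_one, mul_one]
  have hR : ∑ i, ∑ c, ∑ b, Complex.normSq (v i (b, c) - β b * w i c) = 0 := by
    have : ∑ i, ∑ c, ∑ b, (v i (b, c) - β b * w i c) *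
        (starRingEnd ℂ) (v i (b, c) - β b * w i c) = 0 := by
      have e : ∀ i c, ∑ b, (v i (b, c) - β b * w i c) *
          (starRingEnd ℂ) (v i (b, c) - β b * w i c)
          = ∑ b, v i (b, c) * (starRingEnd ℂ) (v i (b, c))
            - w i c * (starRingEnd ℂ) (w i c) :=
        fun i c => sum_residual β (fun b => v i (b, c)) hβ
      simp only [e, Finset.sum_sub_distrib]
      rw [hV, hW, sub_self]
    simp only [Complex.mul_conj] at this
    exact_mod_cast this
  have hprod : ∀ i b c, v i (b, c) = β b * w i c := by
    intro i b c
    have n1 : ∀ i c b, 0 ≤ Complex.normSq (v i (b, c) - β b * w i c) :=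
      fun _ _ _ => Complex.normSq_nonneg _
    rw [Fintype.sum_eq_zero_iff_of_nonneg
      (fun i => Finset.sum_nonneg fun c _ => Finset.sum_nonneg fun b _ => n1 i c b)] at hR
    have h1 := congrFun hR i
    simp only [Pi.zero_apply] at h1
    rw [Fintype.sum_eq_zero_iff_of_nonneg
      (fun c => Finset.sum_nonneg fun b _ => n1 i c b)] at h1
    have h2 := congrFun h1 c
    simp only [Pi.zero_apply] at h2
    rw [Fintype.sum_eq_zero_iff_of_nonneg (fun b => n1 i c b)] at h2
    exact sub_eq_zero.mp (Complex.normSq_eq_zero.mp (congrFun h2 b))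
  choose k g hg hwg hk using fun i => exists_unit_smul (w i)
  refine ⟨g, k, Ψ - ∑ i, k i • tensor3 (α i) β (g i), hg, ?_, by abel, ?_⟩
  · have : ∑ i, (Complex.normSq (k i) : ℂ) = p := by simp only [hk, hW]
    exact_mod_cast this
  · intro i
    funext ⟨b, c⟩
    have hS : ∑ a, (starRingEnd ℂ) (α i a) * (∑ j, k j * (α j a * β b * g j c))
        = β b * w i c := by
      calc _ = ∑ j, k j * β b * g j c * cinner (α i) (α j) := by
            simp only [cinner, Finset.mul_sum]
            rw [Finset.sum_comm]
            exact Finset.sum_congr rfl fun j _ => Finset.sum_congr rfl fun a _ => by ring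
        _ = β b * w i c := by
            simp only [hα i, mul_ite, mul_one, mul_zero, Finset.sum_ite_eq, Finset.mem_univ,
              if_true, hwg]
            ring
    have hvi : ∑ a, (starRingEnd ℂ) (α i a) * Ψ (a, b, c) = β b * w i c := hprod i b c
    simp only [aContract, Pi.sub_apply, Finset.sum_apply, Pi.smul_apply, smul_eq_mul, tensor3,
      mul_sub, Finset.sum_sub_distrib, Pi.zero_apply]
    rw [hvi, hS, sub_self]

end

end EPR
end

section
/- Let ρ be a bipartite state on ℂ^{dA}⊗ℂ^{dB}. Suppose there are unit vectors α_1,…,α_n in ℂ^{dA}, orthonormal vectors β_1,…,β_n in ℂ^{dB}, and p_1,…,p_n > 0 with Σ_{i=1}^n p_i = 1 such that Tr_A[ρ(|α_i⟩⟨α_i|⊗I_B)] = p_i|β_i⟩⟨β_i| for all i. Suppose further there are unit vectors α ∈ ℂ^{dA}, β ∈ ℂ^{dB} and p > 0 with Tr_A[ρ(|α⟩⟨α|⊗I_B)] = p|β⟩⟨β|. Then for every nonzero vector β' in the linear span of {β_i : ⟨β_i, β⟩ ≠ 0} there exist a unit vector α' ∈ ℂ^{dA} and q > 0 such that Tr_A[ρ(|α'⟩⟨α'|⊗I_B)]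 = q |β'⟩⟨β'|/‖β'‖², i.e. Alice can steer Bob's system to every pure state in span{β_i : ⟨β_i, β⟩ ≠ 0}. -/
/-!
Purify `ρ` to a vector `Ψ` on A ⊗ B ⊗ C, so that the conditional state for `v` is the reduced state
on B of `⟨v|Ψ⟩` (`condState_eq`). A reduced state proportional to a pure state forces a product
vector (`rank_one_factor`), hence `⟨α i|Ψ⟩ = β i ⊗ g i` with `‖g i‖² = p i`, and
`⟨αv|Ψ⟩ = βv ⊗ γ` with `‖γ‖² = pv`.

The antilinear map `v ↦ ⟨v|Ψ⟩` has Hilbert-Schmidt norm `‖Ψ‖ = 1`. Since `∑ p i = 1`, the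
orthogonal vectors `β i ⊗ g i` already account for all of it, so they span its range
(`mem_span_of_hs`, `steer_mem_span`). Therefore `βv ⊗ γ = ∑ x i • (β i ⊗ g i)`, and contracting with
`⟨β i|` gives `x i • g i = ⟨β i, βv⟩ • γ`. Whenever `⟨β i, βv⟩ ≠ 0`, the factor `γ` is thus a
multiple of `g i`, so `β i ⊗ γ` is in the range of `v ↦ ⟨v|Ψ⟩`. By linearity so is `β' ⊗ γ` for
each `β'` in the span of these `β i`; a normalized preimage of it steers Bob to `β'`.
-/

open scoped BigOperators Kronecker Classical ComplexOrder

namespace EPR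

noncomputable section

/-- Equality case of a Hilbert-Schmidt estimate. The `K a` are the images of an orthonormal basis
under an antilinear map `T`. If `T` sends unit vectors `u i` to multiples `s i` of orthonormal
vectors `e i`, and the `s i ^ 2` sum to the squared Hilbert-Schmidt norm of `T`, then the range
of `T` lies in the span of the `e i`. The `u i` need not be orthogonal. -/
theorem mem_span_of_hs {E ι κ : Type*} [NormedAddCommGroup E] [InnerProductSpace ℂ E]
    [Fintype ι] [Fintype κ] (e : ι → E) (he : Orthonormal ℂ e) (K : κ → E)
    (u : ι → κ → ℂ) (hu : ∀ i, ∑ a, ‖u i a‖ ^ 2 = 1) (s : ι → ℝ)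
    (hK : ∀ i, ∑ a, (starRingEnd ℂ) (u i a) • K a = (s i : ℂ) • e i)
    (hs : ∑ a, ‖K a‖ ^ 2 = ∑ i, s i ^ 2) (a : κ) :
    K a = ∑ i, inner ℂ (e i) (K a) • e i := by
  -- Equality version of Bessel's inequality.
  have pyth : ∀ a, ‖K a - ∑ i, inner ℂ (e i) (K a) • e i‖ ^ 2
      = ‖K a‖ ^ 2 - ∑ i, ‖inner ℂ (e i) (K a)‖ ^ 2 := by
    intro a
    have h1 : ‖∑ i, inner ℂ (e i) (K a) • e i‖ ^ 2 = ∑ i, ‖inner ℂ (e i) (K a)‖ ^ 2 := by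
      have := he.inner_sum (fun i => inner ℂ (e i) (K a)) (fun i => inner ℂ (e i) (K a)) Finset.univ
      rw [inner_self_eq_norm_sq_to_K] at this
      simp only [Complex.conj_mul'] at this
      apply Complex.ofReal_injective
      push_cast
      exact this
    have h2 : RCLike.re (inner ℂ (K a) (∑ i, inner ℂ (e i) (K a) • e i))
        = ∑ i, ‖inner ℂ (e i) (K a)‖ ^ 2 := by
      rw [inner_sum, map_sum]
      refine Finset.sum_congr rfl fun i _ => ?_
      rw [inner_smul_right, ← inner_conj_symm (K a) (e i), Complex.mul_conj']
      norm_cast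
    rw [@norm_sub_sq ℂ, h1, h2]; ring
  -- Cauchy-Schwarz for `s i = ⟨e i, T (u i)⟩`, using that `u i` is a unit vector.
  have cs : ∀ i, s i ^ 2 ≤ ∑ a, ‖inner ℂ (e i) (K a)‖ ^ 2 := by
    intro i
    have h1 : (s i : ℂ) = ∑ a, (starRingEnd ℂ) (u i a) * inner ℂ (e i) (K a) := by
      have := congrArg (inner ℂ (e i)) (hK i)
      rw [inner_sum, inner_smul_right, inner_self_eq_norm_sq_to_K, he.1 i] at this
      simpa [inner_smul_right] using this.symm
    have h2 : |s i| ≤ ∑ a, ‖u i a‖ * ‖inner ℂ (e i) (K a)‖ := by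
      have : ‖(s i : ℂ)‖ ≤ _ := h1 ▸ norm_sum_le _ _
      simpa using this
    have h3 := Finset.sum_mul_sq_le_sq_mul_sq Finset.univ (fun a => ‖u i a‖)
      (fun a => ‖inner ℂ (e i) (K a)‖)
    rw [hu, one_mul] at h3
    refine le_trans ?_ h3
    rw [← sq_abs]
    gcongr
  have tot : ∑ a, ‖K a - ∑ i, inner ℂ (e i) (K a) • e i‖ ^ 2 ≤ 0 := by
    simp only [pyth]
    rw [Finset.sum_sub_distrib, hs, Finset.sum_comm]
    have := Finset.sum_le_sum fun i (_ : i ∈ Finset.univ) => cs i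
    linarith
  have z := (Finset.sum_eq_zero_iff_of_nonneg (fun a _ => sq_nonneg _)).1
    (le_antisymm tot (Finset.sum_nonneg fun a _ => sq_nonneg _)) a (Finset.mem_univ a)
  exact sub_eq_zero.1 (norm_eq_zero.1 (pow_eq_zero_iff two_ne_zero |>.1 z))

open Matrix in
/-- A bipartite vector `X` whose reduced state is a multiple `p` of a pure state `|u⟩⟨u|` is a
product vector `u ⊗ g`, with `‖g‖² = p`: the component `(1 - |u⟩⟨u|) X` has zero Gram matrix. -/
theorem rank_one_factor {m k : Type*} [Fintype m] [Fintype k] (X : Matrix m k ℂ) (u : m → ℂ)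
    (hu : star u ⬝ᵥ u = 1) (p : ℂ) (hX : X * Xᴴ = p • vecMulVec u (star u)) :
    X = vecMulVec u (star u ᵥ* X) ∧ (star u ᵥ* X) ⬝ᵥ star (star u ᵥ* X) = p := by
  constructor
  · have hP : X - vecMulVec u (star u ᵥ* X) = (1 - vecMulVec u (star u)) * X := by
      rw [Matrix.sub_mul, Matrix.one_mul, vecMulVec_mul]
    have hz : (1 - vecMulVec u (star u)) * vecMulVec u (star u) = 0 := by
      rw [Matrix.sub_mul, Matrix.one_mul, vecMulVec_mul_vecMulVec, hu, one_smul, sub_self]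
    rw [← sub_eq_zero, hP, ← Matrix.self_mul_conjTranspose_eq_zero, conjTranspose_mul,
      Matrix.mul_assoc, ← Matrix.mul_assoc X, hX, Matrix.smul_mul, Matrix.mul_smul, ← Matrix.mul_assoc, hz,
      Matrix.zero_mul, smul_zero]
  · rw [star_vecMul, star_star, ← dotProduct_mulVec, mulVec_mulVec, hX, smul_mulVec,
      vecMulVec_mulVec, hu]
    simp [hu]

/-- The partial contraction `⟨v|Ψ⟩` of a tripartite vector `Ψ`, as a matrix on B and C. Here `Ψ` is
stored as a matrix with rows indexed by AB and columns by the purifying system C, so that its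
reduced state on AB is `Ψ * Ψᴴ`. -/
def steer {dA dB : ℕ} {C : Type*} (Ψ : Matrix (Fin dA × Fin dB) C ℂ) (v : Fin dA → ℂ) :
    Matrix (Fin dB) C ℂ :=
  Matrix.of fun b c => ∑ a, (starRingEnd ℂ) (v a) * Ψ (a, b) c

open Matrix in
/-- The conditional state is the reduced state on B of the contracted purification. -/
theorem condState_eq {dA dB : ℕ} {C : Type*} [Fintype C] (Ψ : Matrix (Fin dA × Fin dB) C ℂ)
    (v : Fin dA → ℂ) : condState (Ψ * Ψᴴ) v = steer Ψ v * (steer Ψ v)ᴴ := by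
  ext b b'
  simp only [condState, steer, Matrix.mul_apply, Matrix.of_apply, Matrix.conjTranspose_apply,
    RCLike.star_def, map_sum, map_mul, Complex.conj_conj, Finset.mul_sum, Finset.sum_mul]
  rw [Finset.sum_comm_cycle]
  refine Finset.sum_congr rfl fun _ _ => ?_
  rw [Finset.sum_comm]
  refine Finset.sum_congr rfl fun _ _ => Finset.sum_congr rfl fun _ _ => ?_
  ring

theorem steer_add {dA dB : ℕ} {C : Type*} (Ψ : Matrix (Fin dA × Fin dB) C ℂ)
    (v w : Fin dA → ℂ) : steer Ψ (v + w) = steer Ψ v + steer Ψ w := by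
  ext b c
  simp [steer, add_mul, Finset.sum_add_distrib]

theorem steer_smul {dA dB : ℕ} {C : Type*} (Ψ : Matrix (Fin dA × Fin dB) C ℂ)
    (z : ℂ) (v : Fin dA → ℂ) : steer Ψ (z • v) = (starRingEnd ℂ) z • steer Ψ v := by
  ext b c
  simp [steer, Finset.mul_sum, mul_assoc]

theorem cinner_self {ι : Type*} [Fintype ι] (u : ι → ℂ) :
    cinner u u = ((∑ a, ‖u a‖ ^ 2 : ℝ) : ℂ) := by
  simp [cinner, Complex.conj_mul']

theorem sum_norm_sq_pos {ι : Type*} [Fintype ι] {u : ι → ℂ} (hu : u ≠ 0) :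
    0 < ∑ a, ‖u a‖ ^ 2 := by
  obtain ⟨a, ha⟩ := Function.ne_iff.1 hu
  exact Finset.sum_pos' (fun _ _ => by positivity) ⟨a, Finset.mem_univ a, by
    have : 0 < ‖u a‖ := norm_pos_iff.2 ha
    positivity⟩

open Matrix in
/-- As `∑ p i = 1` is all of `‖Ψ‖²`, the vectors `β i ⊗ g i` to which Alice steers span the
range of `v ↦ ⟨v|Ψ⟩`. -/
theorem steer_mem_span {dA dB n : ℕ} {C : Type*} [Fintype C]
    (Ψ : Matrix (Fin dA × Fin dB) C ℂ) (htr : (Ψ * Ψᴴ).trace = 1)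
    (α : Fin n → Fin dA → ℂ) (hα : ∀ i, IsUnitVec (α i))
    (β : Fin n → Fin dB → ℂ) (hβ : OrthonormalFam β)
    (p : Fin n → ℝ) (hp : ∀ i, 0 < p i) (hsum : ∑ i, p i = 1)
    (g : Fin n → C → ℂ) (hg : ∀ i, g i ⬝ᵥ star (g i) = p i)
    (hT : ∀ i, steer Ψ (α i) = vecMulVec (β i) (g i)) (v : Fin dA → ℂ) :
    ∃ x : Fin n → ℂ, steer Ψ v = ∑ i, x i • vecMulVec (β i) (g i) := by
  let f : Fin n → EuclideanSpace ℂ (Fin dB × C) :=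
    fun i => WithLp.toLp 2 fun y => β i y.1 * g i y.2
  let K : Fin dA → EuclideanSpace ℂ (Fin dB × C) :=
    fun a => WithLp.toLp 2 fun y => Ψ (a, y.1) y.2
  have hs : ∀ i, (Real.sqrt (p i) : ℂ) ≠ 0 := fun i => by
    exact_mod_cast (Real.sqrt_pos.2 (hp i)).ne'
  have hs2 : ∀ i, (Real.sqrt (p i) : ℂ) * Real.sqrt (p i) = p i := fun i => by
    exact_mod_cast Real.mul_self_sqrt (hp i).le
  have hf : ∀ i j, inner ℂ (f i) (f j) = cinner (β i) (β j) * (g j ⬝ᵥ star (g i)) := by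
    intro i j
    simp only [f, PiLp.inner_apply, RCLike.inner_apply, Fintype.sum_prod_type, cinner, dotProduct,
      Finset.sum_mul_sum, map_mul, Pi.star_apply, RCLike.star_def]
    refine Finset.sum_congr rfl fun _ _ => Finset.sum_congr rfl fun _ _ => ?_
    ring
  let e : Fin n → EuclideanSpace ℂ (Fin dB × C) := fun i => ((Real.sqrt (p i) : ℂ))⁻¹ • f i
  have he : Orthonormal ℂ e := by
    rw [orthonormal_iff_ite]
    intro i j
    simp only [e, inner_smul_left, inner_smul_right, hf, hβ i j]
    split_ifs with hij
    · subst hij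
      rw [hg, ← hs2, map_inv₀, Complex.conj_ofReal]
      field_simp [hs i]
    · simp
  have hu : ∀ i, ∑ a, ‖α i a‖ ^ 2 = 1 := fun i => by
    have := hα i
    rw [IsUnitVec, cinner_self] at this
    exact_mod_cast this
  have hK : ∀ i, ∑ a, (starRingEnd ℂ) (α i a) • K a = (Real.sqrt (p i) : ℂ) • e i := by
    intro i
    simp only [e, smul_inv_smul₀ (hs i)]
    ext y
    have := congrFun (congrFun (hT i) y.1) y.2
    simpa [K, f, steer, vecMulVec_apply] using this
  have hKs : ∑ a, ‖K a‖ ^ 2 = ∑ i, Real.sqrt (p i) ^ 2 := by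
    simp only [Real.sq_sqrt (hp _).le, hsum]
    apply Complex.ofReal_injective
    rw [Complex.ofReal_one, ← htr]
    simp [K, EuclideanSpace.norm_sq_eq, Matrix.trace, Matrix.mul_apply, Fintype.sum_prod_type,
      Complex.mul_conj']
  have key := mem_span_of_hs e he K α hu _ hK hKs
  refine ⟨fun i => ∑ a, (starRingEnd ℂ) (v a) * (inner ℂ (e i) (K a) * (Real.sqrt (p i) : ℂ)⁻¹), ?_⟩
  ext b c
  have key' : ∀ a, Ψ (a, b) c
      = ∑ i, inner ℂ (e i) (K a) * ((Real.sqrt (p i) : ℂ)⁻¹ * (β i b * g i c)) := by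
    intro a
    have := congrArg (fun w : EuclideanSpace ℂ (Fin dB × C) => w (b, c)) (key a)
    simpa only [K, e, f, WithLp.ofLp_sum, Finset.sum_apply, PiLp.smul_apply, smul_eq_mul] using this
  simp only [steer, Matrix.of_apply, Matrix.sum_apply, Matrix.smul_apply, vecMulVec_apply,
    smul_eq_mul, Finset.sum_mul]
  rw [Finset.sum_comm]
  refine Finset.sum_congr rfl fun a _ => ?_
  rw [key' a, Finset.mul_sum]
  refine Finset.sum_congr rfl fun i _ => ?_
  ring

/-- under the hypotheses of Theorem 1 of the paper, Alice can steer Bob's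
system to every pure state in `span {β_i : ⟨β_i, β⟩ ≠ 0}`. -/
theorem stmt8 {dA dB n : ℕ} (ρ : Matrix (Fin dA × Fin dB) (Fin dA × Fin dB) ℂ)
    (hρ : IsState ρ)
    (α : Fin n → Fin dA → ℂ) (hα : ∀ i, IsUnitVec (α i))
    (β : Fin n → Fin dB → ℂ) (hβ : OrthonormalFam β)
    (p : Fin n → ℝ) (hp : ∀ i, 0 < p i) (hsum : ∑ i, p i = 1)
    (h : ∀ i, condState ρ (α i) = (p i : ℂ) • proj (β i))
    (αv : Fin dA → ℂ) (hαv : IsUnitVec αv) (βv : Fin dB → ℂ) (hβv : IsUnitVec βv)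
    (pv : ℝ) (hpv : 0 < pv) (hc : condState ρ αv = (pv : ℂ) • proj βv) :
    ∀ β' : Fin dB → ℂ, β' ≠ 0 →
      β' ∈ Submodule.span ℂ (β '' {i | cinner (β i) βv ≠ 0}) →
      ∃ (α' : Fin dA → ℂ) (q : ℝ), IsUnitVec α' ∧ 0 < q ∧
        condState ρ α' = ((q : ℂ) / cinner β' β') • proj β' := by
  obtain ⟨m, Φ, hΦ⟩ : ∃ (m : ℕ) (Φ : Matrix (Fin dA × Fin dB) (Fin m) ℂ),
      ρ = Φ * Φ.conjTranspose := by
    obtain ⟨m, v, hv⟩ := Matrix.posSemidef_iff_eq_sum_vecMulVec.1 hρ.1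
    refine ⟨m, Matrix.of fun y c => v c y, ?_⟩
    rw [hv]
    ext y z
    simp [Matrix.sum_apply, Matrix.vecMulVec_apply, Matrix.mul_apply]
  subst hΦ
  simp only [condState_eq] at h hc ⊢
  have hTi := fun i => rank_one_factor (steer Φ (α i)) (β i)
    ((hβ i i).trans (if_pos rfl)) (p i) (h i)
  obtain ⟨hTv, hγ⟩ := rank_one_factor (steer Φ αv) βv hβv pv hc
  set γ := Matrix.vecMul (star βv) (steer Φ αv)
  obtain ⟨x, hx⟩ := steer_mem_span Φ hρ.2 α hα β hβ p hp hsum _ (fun i => (hTi i).2)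
    (fun i => (hTi i).1) αv
  set g := fun i => Matrix.vecMul (star (β i)) (steer Φ (α i)) with hgdef
  -- Contracting with `⟨β i|` isolates the `i`-th term of the expansion.
  have hxg : ∀ i, x i • g i = cinner (β i) βv • γ := by
    intro i
    have h1 := congrArg (Matrix.vecMul (star (β i))) (hTv.symm.trans hx)
    have h2 : ∀ j, star (β i) ⬝ᵥ β j = if i = j then 1 else 0 := fun j => hβ i j
    simp only [Matrix.vecMul_vecMulVec, Matrix.vecMul_sum, Matrix.vecMul_smul, h2] at h1
    simp only [ite_smul, one_smul, zero_smul, smul_ite, smul_zero, Finset.sum_ite_eq,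
      Finset.mem_univ, if_true] at h1
    exact h1.symm
  -- The steerable vectors with purifying factor `γ` form a subspace. It contains every `β i` with
  -- `⟨β i, βv⟩ ≠ 0`, since then `γ` is a multiple of `g i`.
  have hspan : ∀ w ∈ Submodule.span ℂ (β '' {i | cinner (β i) βv ≠ 0}),
      ∃ α' : Fin dA → ℂ, steer Φ α' = Matrix.vecMulVec w γ := by
    intro w hw
    induction hw using Submodule.span_induction with
    | mem w hw =>
      obtain ⟨i, hi, rfl⟩ := hw
      refine ⟨(starRingEnd ℂ) (x i / cinner (β i) βv) • α i, ?_⟩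
      have hγi : γ = (x i / cinner (β i) βv) • g i := by
        rw [div_eq_inv_mul, mul_smul, hxg, inv_smul_smul₀ hi]
      rw [steer_smul, Complex.conj_conj, (hTi i).1, hγi, Matrix.vecMulVec_smul]
    | zero => exact ⟨0, by ext; simp [steer]⟩
    | add w₁ w₂ _ _ h₁ h₂ =>
      obtain ⟨a₁, h₁⟩ := h₁
      obtain ⟨a₂, h₂⟩ := h₂
      exact ⟨a₁ + a₂, by rw [steer_add, h₁, h₂, Matrix.add_vecMulVec]⟩
    | smul z w _ hw =>
      obtain ⟨a, ha⟩ := hw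
      exact ⟨(starRingEnd ℂ) z • a, by
        rw [steer_smul, Complex.conj_conj, ha, Matrix.smul_vecMulVec]⟩
  intro β' hβ' hmem
  obtain ⟨a, ha⟩ := hspan β' hmem
  have hγ0 : γ ≠ 0 := by
    intro h0
    rw [h0, zero_dotProduct] at hγ
    exact hpv.ne (by exact_mod_cast hγ)
  have ha0 : a ≠ 0 := by
    rintro rfl
    obtain ⟨b, hb⟩ := Function.ne_iff.1 hβ'
    obtain ⟨c, hc'⟩ := Function.ne_iff.1 hγ0
    have := congrFun (congrFun ha b) c
    simp only [steer, Pi.zero_apply, map_zero, zero_mul, Finset.sum_const_zero, Matrix.of_apply,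
      Matrix.vecMulVec_apply] at this
    exact mul_ne_zero hb hc' this.symm
  have hN := sum_norm_sq_pos ha0
  have hM := sum_norm_sq_pos hβ'
  have hNa := cinner_self a
  have hMβ := cinner_self β'
  set N := ∑ i, ‖a i‖ ^ 2
  set M := ∑ i, ‖β' i‖ ^ 2
  have hr : ((Real.sqrt N : ℂ)⁻¹) * (Real.sqrt N : ℂ)⁻¹ = (N : ℂ)⁻¹ := by
    rw [← mul_inv]
    exact_mod_cast congrArg (fun t : ℝ => ((t : ℂ))⁻¹) (Real.mul_self_sqrt hN.le)
  -- Normalizing `a` divides the conditional state `pv • |β'⟩⟨β'|` by `N = ‖a‖²`.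
  refine ⟨(Real.sqrt N : ℂ)⁻¹ • a, pv * M / N, ?_, by positivity, ?_⟩
  · have : cinner ((Real.sqrt N : ℂ)⁻¹ • a) ((Real.sqrt N : ℂ)⁻¹ • a)
        = ((Real.sqrt N : ℂ)⁻¹ * (Real.sqrt N : ℂ)⁻¹) * cinner a a := by
      simp only [cinner, Finset.mul_sum, Pi.smul_apply, smul_eq_mul, map_mul, map_inv₀,
        Complex.conj_ofReal]
      refine Finset.sum_congr rfl fun _ _ => ?_
      ring
    rw [IsUnitVec, this, hr, hNa]
    exact inv_mul_cancel₀ (by exact_mod_cast hN.ne')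
  · have hcoef : ((pv * M / N : ℝ) : ℂ) / cinner β' β' = (N : ℂ)⁻¹ * pv := by
      have : (M : ℂ) ≠ 0 := by exact_mod_cast hM.ne'
      rw [hMβ]
      push_cast
      field_simp
    have hpr : proj β' = Matrix.vecMulVec β' (star β') := rfl
    rw [hcoef, steer_smul, ha, hpr, map_inv₀, Complex.conj_ofReal, Matrix.conjTranspose_smul,
      Matrix.smul_mul, Matrix.mul_smul, smul_smul, Matrix.conjTranspose_vecMulVec,
      Matrix.vecMulVec_mul_vecMulVec, hγ, star_inv₀, RCLike.star_def, Complex.conj_ofReal, hr,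
      Matrix.vecMulVec_smul, smul_smul]

end

end EPR
end

section
/- Let Ψ be a unit vector in ℂ^{dA}⊗ℂ^{dB}⊗ℂ^{dC} with reduced state ρ_Ψ on AB, and suppose Ψ = Σ_{i=1}^n c_i α_i⊗β_i⊗γ_i where {α_i} are orthonormal in ℂ^{dA}, {β_i} are orthonormal in ℂ^{dB}, the γ_i are unit vectors in ℂ^{dC}, and all c_i ≠ 0 with Σ_i |c_i|² = 1. If there exist unit vectors α ∈ ℂ^{dA}, β ∈ ℂ^{dB}, γ ∈ ℂ^{dC} and c ≠ 0 such that ⟨α|Ψ⟩ = c(β⊗γ), then for every index i with ⟨β_i, β⟩ ≠ 0 one has |γ_i⟩⟨γ_i| = |γ⟩⟨γ|; consequently, writing S = {i : ⟨β_i, β⟩ ≠ 0}, Ψ can be written (after absorbing phases) as Ψ = (Σ_{i∈S} c_i α_i⊗β_i)⊗γ + Σ_{i∉S} c_i α_i⊗β_i⊗γ_i. -/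
/-!
Contracting `⟨α|Ψ⟩ = c (β ⊗ γ)` with `β_i` on the B factor isolates, by orthonormality of the `β_i`,
the single term `c_i ⟨α, α_i⟩ γ_i = c ⟨β_i, β⟩ γ` (`contract_eq`). When `⟨β_i, β⟩ ≠ 0` the right-hand
side is nonzero, so the unit vectors `γ_i` and `γ` are proportional, and the proportionality factor
is a phase (`exists_phase`). A phase leaves the projection unchanged and, in the decomposition of
`Ψ`, can be absorbed into `c_i`.
-/

open scoped BigOperators Kronecker Classical ComplexOrder

namespace EPR

noncomputable section

/-- Unit vectors satisfying a nontrivial proportionality relation differ by a phase. -/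
theorem exists_phase {ι : Type*} [Fintype ι] {u v : ι → ℂ} (hu : IsUnitVec u) (hv : IsUnitVec v)
    {x y : ℂ} (hy : y ≠ 0) (h : ∀ k, x * u k = y * v k) :
    ∃ t : ℂ, t * (starRingEnd ℂ) t = 1 ∧ ∀ k, u k = t * v k := by
  have hx : x ≠ 0 := by
    rintro rfl
    have hv0 : ∀ k, v k = 0 := fun k => by
      have := h k
      rw [zero_mul] at this
      exact (mul_eq_zero.mp this.symm).resolve_left hy
    simp [IsUnitVec, cinner, hv0] at hv
  have hk : ∀ k, u k = y / x * v k := fun k => by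
    rw [div_mul_eq_mul_div, eq_div_iff hx, ← h k, mul_comm]
  refine ⟨y / x, ?_, hk⟩
  generalize y / x = t at hk
  calc t * (starRingEnd ℂ) t = t * (starRingEnd ℂ) t * cinner v v := by
        rw [show cinner v v = 1 from hv, mul_one]
    _ = cinner u u := by
        simp only [cinner, Finset.mul_sum, hk, map_mul]
        exact Finset.sum_congr rfl fun k _ => by ring
    _ = 1 := hu

/-- Contracting `⟨α|Ψ⟩` with `β_i` on the B factor leaves only the `i`-th term of the
decomposition of `Ψ`. -/
theorem contract_eq {dA dB dC n : ℕ} {α : Fin n → Fin dA → ℂ} {β : Fin n → Fin dB → ℂ}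
    (hβ : OrthonormalFam β) {γ : Fin n → Fin dC → ℂ} {c : Fin n → ℂ} {αv : Fin dA → ℂ}
    {βv : Fin dB → ℂ} {γv : Fin dC → ℂ} {cv : ℂ}
    (h : aContract αv (∑ i, c i • tensor3 (α i) (β i) (γ i)) = cv • tensor2 βv γv)
    (i : Fin n) (k : Fin dC) :
    c i * cinner αv (α i) * γ i k = cv * cinner (β i) βv * γv k := by
  have hb : ∀ b, ∑ j, c j * cinner αv (α j) * γ j k * β j b = cv * (βv b * γv k) := fun b => by
    have := congrFun h (b, k)
    simp only [aContract, tensor2, tensor3, Finset.sum_apply, Pi.smul_apply, smul_eq_mul] at this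
    rw [← this]
    simp only [cinner, Finset.mul_sum, Finset.sum_mul]
    rw [Finset.sum_comm]
    exact Finset.sum_congr rfl fun a _ => Finset.sum_congr rfl fun j _ => by ring
  calc c i * cinner αv (α i) * γ i k
      = ∑ j, c j * cinner αv (α j) * γ j k * cinner (β i) (β j) := by
        simp [hβ i]
    _ = ∑ b, (starRingEnd ℂ) (β i b) * ∑ j, c j * cinner αv (α j) * γ j k * β j b := by
        simp only [cinner.eq_1 (β i), Finset.mul_sum]
        rw [Finset.sum_comm]
        exact Finset.sum_congr rfl fun b _ => Finset.sum_congr rfl fun j _ => by ring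
    _ = cv * cinner (β i) βv * γv k := by
        simp only [hb]
        simp only [cinner, Finset.mul_sum, Finset.sum_mul]
        exact Finset.sum_congr rfl fun b _ => by ring

/-- for `Ψ = ∑ c_i α_i⊗β_i⊗γ_i` (orthonormal `α`, orthonormal `β`, unit
`γ_i`, all `c_i ≠ 0`), if `⟨α|Ψ⟩ = c (β⊗γ)` for some unit vectors and `c ≠ 0`, then
`|γ_i⟩⟨γ_i| = |γ⟩⟨γ|` for every `i` with `⟨β_i, β⟩ ≠ 0`, and after absorbing phases
`Ψ = (∑_{i∈S} c'_i α_i⊗β_i)⊗γ + ∑_{i∉S} c_i α_i⊗β_i⊗γ_i` where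
`S = {i : ⟨β_i, β⟩ ≠ 0}`. -/
theorem stmt9 {dA dB dC n : ℕ} (Ψ : Fin dA × Fin dB × Fin dC → ℂ) (hΨ : IsUnitVec Ψ)
    (α : Fin n → Fin dA → ℂ) (hα : OrthonormalFam α)
    (β : Fin n → Fin dB → ℂ) (hβ : OrthonormalFam β)
    (γ : Fin n → Fin dC → ℂ) (hγ : ∀ i, IsUnitVec (γ i))
    (c : Fin n → ℂ) (hc : ∀ i, c i ≠ 0) (hcs : ∑ i, Complex.normSq (c i) = 1)
    (hdecomp : Ψ = ∑ i, c i • tensor3 (α i) (β i) (γ i))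
    (αv : Fin dA → ℂ) (hαv : IsUnitVec αv) (βv : Fin dB → ℂ) (hβv : IsUnitVec βv)
    (γv : Fin dC → ℂ) (hγv : IsUnitVec γv) (cv : ℂ) (hcv : cv ≠ 0)
    (h : aContract αv Ψ = cv • tensor2 βv γv) :
    (∀ i, cinner (β i) βv ≠ 0 → proj (γ i) = proj γv) ∧
    ∃ c' : Fin n → ℂ, (∀ i, Complex.normSq (c' i) = Complex.normSq (c i)) ∧
      Ψ = (∑ i ∈ Finset.univ.filter (fun i => cinner (β i) βv ≠ 0),
            c' i • tensor3 (α i) (β i) γv)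
        + ∑ i ∈ Finset.univ.filter (fun i => cinner (β i) βv = 0),
            c i • tensor3 (α i) (β i) (γ i) := by
  have key : ∀ i, cinner (β i) βv ≠ 0 →
      ∃ t : ℂ, t * (starRingEnd ℂ) t = 1 ∧ ∀ k, γ i k = t * γv k := fun i hi =>
    exists_phase (hγ i) hγv (mul_ne_zero hcv hi) (contract_eq hβ (hdecomp ▸ h) i)
  refine ⟨fun i hi => ?_, ?_⟩
  · obtain ⟨t, ht, hk⟩ := key i hi
    ext k l
    simp only [proj, Matrix.of_apply, hk, map_mul]
    linear_combination γv k * (starRingEnd ℂ) (γv l) * ht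
  · choose! t ht hk using key
    -- Outside `S` the coefficient `c' i` does not enter the sum, but its modulus is still prescribed.
    refine ⟨fun i => if cinner (β i) βv ≠ 0 then c i * t i else c i, fun i => ?_, ?_⟩
    · dsimp only
      split_ifs with hi
      · have h1 : Complex.normSq (t i) = 1 := by
          have := ht i hi
          rw [Complex.mul_conj] at this
          exact_mod_cast this
        rw [Complex.normSq_mul, h1, mul_one]
      · rfl
    · rw [hdecomp, ← Finset.sum_filter_not_add_sum_filter Finset.univ
        (fun i => cinner (β i) βv = 0)]
      congr 1
      refine Finset.sum_congr rfl fun i hi => ?_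
      have hi' : cinner (β i) βv ≠ 0 := (Finset.mem_filter.mp hi).2
      ext p
      simp only [if_pos hi', tensor3, Pi.smul_apply, smul_eq_mul, hk i hi']
      ring

end

end EPR
end

section
/- Let ρ be a bipartite state on ℂ²⊗ℂ² (two qubits). Suppose there are an orthonormal basis {α_1, α_2} of ℂ², orthonormal unit vectors β_1, β_2 of ℂ², and p_1, p_2 > 0 with p_1 + p_2 = 1 such that Tr_A[ρ(|α_i⟩⟨α_i|⊗I)] = p_i|β_i⟩⟨β_i| for i = 1,2. Suppose further there are unit vectors α, β ∈ ℂ² and p > 0 with Tr_A[ρ(|α⟩⟨α|⊗I)] = p|β⟩⟨β|, where ⟨β_1, β⟩ ≠ 0 and ⟨β_2, β⟩ ≠ 0. Then ρ is a pure state (ρ has rank 1). -/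
/-!
For a positive semidefinite `ρ`, a steered state `Tr_A[ρ(|a⟩⟨a| ⊗ I)] = p|b⟩⟨b|` forces
`ρ (a ⊗ c) = 0` for every `c ⊥ b`, because `⟨a ⊗ c, ρ (a ⊗ c)⟩ = p |⟨c, b⟩|² = 0`
(`mulVec_tensor2_eq_zero`). Hence `ρ` kills `α₀ ⊗ β₁`, `α₁ ⊗ β₀` and `αv ⊗ γ`, where
`γ = conj ⟨β₁, βv⟩ β₀ - conj ⟨β₀, βv⟩ β₁` is orthogonal to `βv`. Modulo the first two
vectors, the third is a combination of `α₀ ⊗ β₀` and `α₁ ⊗ β₁` whose coefficients are not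
both zero, so the columns `ρ (αᵢ ⊗ βⱼ)` are all multiples of one vector. Thus `ρ` has the
form `ρ k l = v k * f l`, and a state of this form is pure (`pure_of_factor`).
-/

open scoped BigOperators Kronecker Classical ComplexOrder

namespace EPR

noncomputable section

lemma mulVec_tensor2_eq_zero {ρ : Matrix (Fin 2 × Fin 2) (Fin 2 × Fin 2) ℂ}
    (hρ : ρ.PosSemidef) {a b c : Fin 2 → ℂ} {p : ℂ}
    (h : condState ρ a = p • proj b) (hc : cinner c b = 0) :
    ρ.mulVec (tensor2 a c) = 0 := by
  rw [← hρ.dotProduct_mulVec_zero_iff]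
  have key : star (tensor2 a c) ⬝ᵥ ρ.mulVec (tensor2 a c)
      = ∑ k, ∑ l, (starRingEnd ℂ) (c k) * c l * condState ρ a k l := by
    simp [dotProduct, Matrix.mulVec, tensor2, condState, Fintype.sum_prod_type]
    ring
  have hb : ∑ k, ∑ l, (starRingEnd ℂ) (c k) * c l * (p • proj b) k l
      = p * cinner c b * (starRingEnd ℂ) (cinner c b) := by
    simp [proj, cinner]
    ring
  rw [key, h, hb, hc]
  simp

/-- Resolution of the identity: an orthonormal basis of `ℂ²` satisfies `∑ |αᵢ⟩⟨αᵢ| = I`. -/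
lemma orthonormalFam_complete {α : Fin 2 → Fin 2 → ℂ} (hα : OrthonormalFam α) (k l : Fin 2) :
    ∑ i, α i k * (starRingEnd ℂ) (α i l) = if k = l then 1 else 0 := by
  have h1 : (Matrix.of fun i k => (starRingEnd ℂ) (α i k)) * (Matrix.of fun k i => α i k)
      = (1 : Matrix (Fin 2) (Fin 2) ℂ) := by
    ext i j
    simpa [Matrix.mul_apply, cinner, Matrix.one_apply] using hα i j
  rw [mul_eq_one_comm] at h1
  have h2 := congrFun (congrFun h1 k) l
  simpa [Matrix.mul_apply, Matrix.one_apply] using h2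

/-- With `ρ m m ≠ 0`, the vanishing of the `2 × 2` minors and Hermiticity give
`ρ = |Ψ⟩⟨Ψ|` for `Ψ` the `m`-th column divided by `√(ρ m m)`. -/
lemma pure_of_factor {ι : Type*} [Fintype ι] {ρ : Matrix ι ι ℂ} (hρ : IsState ρ)
    (v f : ι → ℂ) (hf : ∀ k l, ρ k l = v k * f l) :
    ∃ Ψ : ι → ℂ, IsUnitVec Ψ ∧ ρ = proj Ψ := by
  obtain ⟨hpos, htr⟩ := hρ
  obtain ⟨m, hm⟩ : ∃ m, ρ m m ≠ 0 := by
    by_contra! hcon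
    simp [Matrix.trace, hcon] at htr
  have hmm : 0 ≤ ρ m m := hpos.diag_nonneg
  obtain ⟨r, hr0, hr⟩ : ∃ r : ℝ, 0 ≤ r ∧ ρ m m = (r : ℂ) := by
    refine ⟨(ρ m m).re, (Complex.le_def.mp hmm).1, ?_⟩
    apply Complex.ext
    · simp
    · simpa using (Complex.le_def.mp hmm).2.symm
  have hs : ((Real.sqrt r : ℝ) : ℂ) * (Real.sqrt r : ℝ) = ρ m m := by
    rw [hr, ← Complex.ofReal_mul, Real.mul_self_sqrt hr0]
  have hs0 : ((Real.sqrt r : ℝ) : ℂ) ≠ 0 := by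
    intro h0
    rw [h0, zero_mul] at hs
    exact hm hs.symm
  have hpure : ∀ k l, ρ k l = (ρ k m / (Real.sqrt r : ℝ)) *
      (starRingEnd ℂ) (ρ l m / (Real.sqrt r : ℝ)) := by
    intro k l
    have hherm : (starRingEnd ℂ) (ρ l m) = ρ m l := hpos.isHermitian.apply m l
    rw [map_div₀, hherm, Complex.conj_ofReal, div_mul_div_comm, hs, eq_div_iff hm,
      hf, hf, hf, hf]
    ring
  refine ⟨fun k => ρ k m / (Real.sqrt r : ℝ), ?_, ?_⟩
  · rw [IsUnitVec, cinner, ← htr, Matrix.trace]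
    refine Finset.sum_congr rfl fun k _ => ?_
    rw [Matrix.diag_apply, hpure k k, mul_comm]
  · ext k l
    exact hpure k l

/-- for a two-qubit state, two orthogonal pure steered states with
probabilities summing to 1 plus one more pure steered state (non-orthogonal to both)
force the shared state to be pure. -/
theorem stmt10 (ρ : Matrix (Fin 2 × Fin 2) (Fin 2 × Fin 2) ℂ) (hρ : IsState ρ)
    (α : Fin 2 → Fin 2 → ℂ) (hα : OrthonormalFam α)
    (β : Fin 2 → Fin 2 → ℂ) (hβ : OrthonormalFam β)
    (p : Fin 2 → ℝ) (hp : ∀ i, 0 < p i) (hsum : p 0 + p 1 = 1)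
    (h : ∀ i, condState ρ (α i) = (p i : ℂ) • proj (β i))
    (αv βv : Fin 2 → ℂ) (hαv : IsUnitVec αv) (hβv : IsUnitVec βv)
    (pv : ℝ) (hpv : 0 < pv) (hc : condState ρ αv = (pv : ℂ) • proj βv)
    (h0 : cinner (β 0) βv ≠ 0) (h1 : cinner (β 1) βv ≠ 0) :
    ∃ Ψ : Fin 2 × Fin 2 → ℂ, IsUnitVec Ψ ∧ ρ = proj Ψ := by
  have k01 : ρ.mulVec (tensor2 (α 0) (β 1)) = 0 :=
    mulVec_tensor2_eq_zero hρ.1 (h 0) (by simpa using hβ 1 0)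
  have k10 : ρ.mulVec (tensor2 (α 1) (β 0)) = 0 :=
    mulVec_tensor2_eq_zero hρ.1 (h 1) (by simpa using hβ 0 1)
  set c0 := cinner (β 0) βv with hc0
  set c1 := cinner (β 1) βv with hc1
  -- `γ` is orthogonal to `βv`; its coordinates in the basis `β` are nonzero.
  let γ : Fin 2 → ℂ := fun b => (starRingEnd ℂ) c1 * β 0 b - (starRingEnd ℂ) c0 * β 1 b
  have hγ : cinner γ βv = 0 := by
    have : cinner γ βv = c1 * c0 - c0 * c1 := by
      simp only [γ, cinner, Fin.sum_univ_two, map_sub, map_mul, Complex.conj_conj] at hc0 hc1 ⊢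
      linear_combination (-c1) * hc0 + c0 * hc1
    rw [this]; ring
  have kv : ρ.mulVec (tensor2 αv γ) = 0 := mulVec_tensor2_eq_zero hρ.1 hc hγ
  set a0 := cinner (α 0) αv with ha0
  set a1 := cinner (α 1) αv with ha1
  have hexp : ∀ a, αv a = a0 * α 0 a + a1 * α 1 a := by
    intro a
    have e0 := orthonormalFam_complete hα a 0
    have e1 := orthonormalFam_complete hα a 1
    simp only [cinner, Fin.sum_univ_two] at e0 e1 ha0 ha1
    rw [ha0, ha1]
    fin_cases a <;> simp at e0 e1 ⊢ <;> linear_combination (-αv 0) * e0 - αv 1 * e1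
  have ha : a0 ≠ 0 ∨ a1 ≠ 0 := by
    by_contra! hcon
    simp [IsUnitVec, cinner, hexp, hcon] at hαv
  set v0 := ρ.mulVec (tensor2 (α 0) (β 0)) with hv0
  set v1 := ρ.mulVec (tensor2 (α 1) (β 1)) with hv1
  have hrel : ∀ k, a0 * (starRingEnd ℂ) c1 * v0 k = a1 * (starRingEnd ℂ) c0 * v1 k := by
    have hdec : tensor2 αv γ = (a0 * (starRingEnd ℂ) c1) • tensor2 (α 0) (β 0)
        - (a0 * (starRingEnd ℂ) c0) • tensor2 (α 0) (β 1)
        + (a1 * (starRingEnd ℂ) c1) • tensor2 (α 1) (β 0)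
        - (a1 * (starRingEnd ℂ) c0) • tensor2 (α 1) (β 1) := by
      funext x
      simp only [tensor2, γ, hexp, Pi.add_apply, Pi.sub_apply, Pi.smul_apply, smul_eq_mul]
      ring
    intro k
    have := congrFun kv k
    rw [hdec, Matrix.mulVec_sub, Matrix.mulVec_add, Matrix.mulVec_sub] at this
    simp only [Matrix.mulVec_smul, k01, k10, ← hv0, ← hv1] at this
    simp at this
    linear_combination this
  -- `ρ = ∑ ρ|αᵢ⊗βⱼ⟩⟨αᵢ⊗βⱼ|`, in which the two mixed terms vanish.
  have hρexp : ∀ k l, ρ k l = v0 k * (starRingEnd ℂ) (tensor2 (α 0) (β 0) l)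
      + v1 k * (starRingEnd ℂ) (tensor2 (α 1) (β 1) l) := by
    intro k l
    have hδ : ∀ m : Fin 2 × Fin 2,
        ∑ i, ∑ j, tensor2 (α i) (β j) m * (starRingEnd ℂ) (tensor2 (α i) (β j) l)
          = if m = l then 1 else 0 := by
      intro m
      have : (if m = l then (1 : ℂ) else 0)
          = (if m.1 = l.1 then 1 else 0) * (if m.2 = l.2 then 1 else 0) := by
        by_cases h1 : m.1 = l.1 <;> by_cases h2 : m.2 = l.2 <;> simp [Prod.ext_iff, h1, h2]
      rw [this, ← orthonormalFam_complete hα, ← orthonormalFam_complete hβ,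
        Finset.sum_mul_sum]
      simp only [tensor2, map_mul]
      refine Finset.sum_congr rfl fun i _ => Finset.sum_congr rfl fun j _ => by ring
    have hsumρ : ρ k l = ∑ i, ∑ j, ρ.mulVec (tensor2 (α i) (β j)) k
        * (starRingEnd ℂ) (tensor2 (α i) (β j) l) := by
      have : ρ k l = ∑ m, ρ k m * (if m = l then 1 else 0) := by simp
      rw [this]
      simp only [← hδ, Matrix.mulVec, dotProduct, Fin.sum_univ_two, mul_add, Finset.sum_add_distrib,
        Finset.sum_mul, mul_assoc]
    rw [hsumρ]
    simp [Fin.sum_univ_two, k01, k10, hv0, hv1]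
  have hcc0 : (starRingEnd ℂ) c0 ≠ 0 := by simpa using h0
  have hcc1 : (starRingEnd ℂ) c1 ≠ 0 := by simpa using h1
  rcases ha with ha | ha
  · refine pure_of_factor hρ v1 (fun l => a1 * (starRingEnd ℂ) c0 / (a0 * (starRingEnd ℂ) c1)
      * (starRingEnd ℂ) (tensor2 (α 0) (β 0) l) + (starRingEnd ℂ) (tensor2 (α 1) (β 1) l)) ?_
    intro k l
    have : v0 k = a1 * (starRingEnd ℂ) c0 / (a0 * (starRingEnd ℂ) c1) * v1 k := by
      rw [div_mul_eq_mul_div, eq_div_iff (mul_ne_zero ha hcc1), ← hrel]; ring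
    rw [hρexp, this]; ring
  · refine pure_of_factor hρ v0 (fun l => (starRingEnd ℂ) (tensor2 (α 0) (β 0) l)
      + a0 * (starRingEnd ℂ) c1 / (a1 * (starRingEnd ℂ) c0)
      * (starRingEnd ℂ) (tensor2 (α 1) (β 1) l)) ?_
    intro k l
    have : v1 k = a0 * (starRingEnd ℂ) c1 / (a1 * (starRingEnd ℂ) c0) * v0 k := by
      rw [div_mul_eq_mul_div, eq_div_iff (mul_ne_zero ha hcc0), hrel]; ring
    rw [hρexp, this]; ring

end

end EPR
end

section
/- Let {A'_{a|x}} be an assemblage of positive semidefinite dB×dB matrices. Suppose there are pairs (a_1,x_1),…,(a_m,x_m), unit vectors β_1,…,β_m with pairwise distinct projections |β_k⟩⟨β_k|, and p_1,…,p_m > 0 with Σ_{k=1}^m p_k > 1, such that A'_{a_k|x_k} = p_k|β_k⟩⟨β_k| for each k. Then the assemblage admits no local hidden state model. -/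
/-!
A pure state is an extreme point of the set of states: if a nonnegative combination of states is a
multiple of `|β⟩⟨β|`, every state of positive weight in it equals `|β⟩⟨β|` (`eq_proj_of_sum_eq`).
Hence in a local hidden state model only the hidden states `σ_ξ = |β_k⟩⟨β_k|` contribute to the
member `p_k |β_k⟩⟨β_k|`, and taking traces gives `p_k ≤ ∑ P(ξ)` over those `ξ`. The projections
being distinct, each `ξ` is counted for at most one `k`, so `∑ p_k ≤ ∑ P(ξ) = 1`.
-/

open scoped BigOperators Kronecker Classical ComplexOrder

namespace EPR

noncomputable section

section

open scoped Matrix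

lemma proj_eq_vecMulVec_s12 {d : ℕ} (u : Fin d → ℂ) : proj u = Matrix.vecMulVec u (star u) := rfl

lemma IsUnitVec.star_dotProduct {d : ℕ} {u : Fin d → ℂ} (hu : IsUnitVec u) : star u ⬝ᵥ u = 1 := hu

lemma trace_proj {d : ℕ} {u : Fin d → ℂ} (hu : IsUnitVec u) : (proj u).trace = 1 := by
  rw [proj_eq_vecMulVec_s12, Matrix.trace_vecMulVec, dotProduct_comm, hu.star_dotProduct]

lemma proj_mul_self {d : ℕ} {u : Fin d → ℂ} (hu : IsUnitVec u) : proj u * proj u = proj u := by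
  rw [proj_eq_vecMulVec_s12, Matrix.vecMulVec_mul_vecMulVec, hu.star_dotProduct, one_smul]

lemma proj_isHermitian {d : ℕ} (u : Fin d → ℂ) : (proj u).IsHermitian :=
  (Matrix.posSemidef_vecMulVec_self_star u).isHermitian

lemma proj_mul_mul_proj {d : ℕ} (u : Fin d → ℂ) (M : Matrix (Fin d) (Fin d) ℂ) :
    proj u * M * proj u = (star u ⬝ᵥ M *ᵥ u) • proj u := by
  rw [proj_eq_vecMulVec_s12, Matrix.mul_assoc, Matrix.mul_vecMulVec, Matrix.vecMulVec_mul_vecMulVec,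
    Matrix.vecMulVec_smul]

/-- A state whose quadratic form vanishes on the kernel of `|u⟩⟨u|` is `|u⟩⟨u|` itself: its support
lies in the line spanned by `u`, and the trace fixes the scalar. -/
lemma IsState.eq_proj {d : ℕ} {u : Fin d → ℂ} (hu : IsUnitVec u)
    {ρ : Matrix (Fin d) (Fin d) ℂ} (hρ : IsState ρ)
    (hker : ∀ v, proj u *ᵥ v = 0 → star v ⬝ᵥ ρ *ᵥ v = 0) : ρ = proj u := by
  have hzero : ρ * (1 - proj u) = 0 := by
    refine Matrix.ext_of_mulVec_single fun j => ?_
    rw [← Matrix.mulVec_mulVec, Matrix.zero_mulVec, ← hρ.1.dotProduct_mulVec_zero_iff]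
    apply hker
    rw [Matrix.mulVec_mulVec, Matrix.mul_sub, Matrix.mul_one, proj_mul_self hu, sub_self,
      Matrix.zero_mulVec]
  have hright : ρ * proj u = ρ := by
    rw [Matrix.mul_sub, Matrix.mul_one, sub_eq_zero] at hzero
    exact hzero.symm
  have hleft : proj u * ρ = ρ := by
    have := congrArg Matrix.conjTranspose hright
    rwa [Matrix.conjTranspose_mul, hρ.1.isHermitian.eq, (proj_isHermitian u).eq] at this
  have hmul : ρ = (star u ⬝ᵥ ρ *ᵥ u) • proj u := by
    rw [← proj_mul_mul_proj, hleft, hright]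
  have hscalar : star u ⬝ᵥ ρ *ᵥ u = 1 := by
    have := congrArg Matrix.trace hmul
    rw [hρ.2, Matrix.trace_smul, trace_proj hu, smul_eq_mul, mul_one] at this
    exact this.symm
  rwa [hscalar, one_smul] at hmul

/-- Pure states are extreme: in a nonnegative combination of states that is a multiple of
`|u⟩⟨u|`, every state of positive weight equals `|u⟩⟨u|`. -/
lemma eq_proj_of_sum_eq {d n : ℕ} {u : Fin d → ℂ} (hu : IsUnitVec u)
    {σ : Fin n → Matrix (Fin d) (Fin d) ℂ} (hσ : ∀ ξ, IsState (σ ξ))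
    {c : Fin n → ℝ} (hc : ∀ ξ, 0 ≤ c ξ) {q : ℝ}
    (hsum : (q : ℂ) • proj u = ∑ ξ, (c ξ : ℂ) • σ ξ) {ξ : Fin n} (hξ : c ξ ≠ 0) :
    σ ξ = proj u := by
  refine (hσ ξ).eq_proj hu fun v hv => ?_
  have hform : ∑ η, (c η : ℂ) * (star v ⬝ᵥ σ η *ᵥ v) = 0 := by
    have := congrArg (fun M => star v ⬝ᵥ M *ᵥ v) hsum
    simp only [Matrix.smul_mulVec, hv, smul_zero, dotProduct_zero, Matrix.sum_mulVec,
      dotProduct_sum, dotProduct_smul, smul_eq_mul] at this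
    exact this.symm
  have hnonneg : ∀ η ∈ Finset.univ, 0 ≤ (c η : ℂ) * (star v ⬝ᵥ σ η *ᵥ v) := fun η _ =>
    mul_nonneg (Complex.zero_le_real.2 (hc η)) ((hσ η).1.dotProduct_mulVec_nonneg v)
  have hterm := (Finset.sum_eq_zero_iff_of_nonneg hnonneg).1 hform ξ (Finset.mem_univ ξ)
  exact (mul_eq_zero.1 hterm).resolve_left (Complex.ofReal_ne_zero.2 hξ)

end

/-- an assemblage containing pure members `p_k |β_k⟩⟨β_k|` with pairwise
distinct projections and `∑ p_k > 1` admits no local hidden state model. -/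
theorem stmt12 {dB m : ℕ} {A X : Type*} [Fintype A]
    (As : A → X → Matrix (Fin dB) (Fin dB) ℂ) (hAs : ∀ a x, (As a x).PosSemidef)
    (av : Fin m → A) (xv : Fin m → X)
    (β : Fin m → Fin dB → ℂ) (hβ : ∀ k, IsUnitVec (β k))
    (hdist : ∀ k l, k ≠ l → proj (β k) ≠ proj (β l))
    (p : Fin m → ℝ) (hp : ∀ k, 0 < p k) (hsum : 1 < ∑ k, p k)
    (h : ∀ k, As (av k) (xv k) = (p k : ℂ) • proj (β k)) :
    ¬ ∃ (n : ℕ) (P : Fin n → ℝ) (σ : Fin n → Matrix (Fin dB) (Fin dB) ℂ)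
        (R : A → X → Fin n → ℝ), LHSModel As P σ R := by
  rintro ⟨n, P, σ, R, hP, hPsum, hσ, hR, -, hmodel⟩
  have hbound : ∀ k, p k ≤ ∑ ξ, if σ ξ = proj (β k) then P ξ else 0 := by
    intro k
    have hk := (h k).symm.trans (hmodel (av k) (xv k))
    have htrace : p k = ∑ ξ, R (av k) (xv k) ξ * P ξ := by
      have := congrArg Matrix.trace hk
      simp only [Matrix.trace_smul, trace_proj (hβ k), Matrix.trace_sum, (hσ _).2, smul_eq_mul,
        mul_one] at this
      exact_mod_cast this
    rw [htrace]
    refine Finset.sum_le_sum fun ξ _ => ?_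
    split_ifs with hξ
    · exact mul_le_of_le_one_left (hP ξ) (hR _ _ ξ).2
    · by_contra hne
      exact hξ (eq_proj_of_sum_eq (hβ k) hσ (fun η => mul_nonneg (hR _ _ η).1 (hP η)) hk
        fun h0 => hne h0.le)
  have hcount : ∀ ξ, (∑ k, if σ ξ = proj (β k) then P ξ else 0) ≤ P ξ := by
    intro ξ
    by_cases hex : ∃ k, σ ξ = proj (β k)
    · obtain ⟨k, hk⟩ := hex
      rw [Finset.sum_eq_single k, if_pos hk]
      · intro l _ hl
        exact if_neg fun hl' => hdist l k hl (hl'.symm.trans hk)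
      · simp
    · rw [Finset.sum_eq_zero fun k _ => if_neg fun hk => hex ⟨k, hk⟩]
      exact hP ξ
  have hle : ∑ k, p k ≤ 1 := by
    calc ∑ k, p k ≤ ∑ k, ∑ ξ, if σ ξ = proj (β k) then P ξ else 0 :=
          Finset.sum_le_sum fun k _ => hbound k
      _ = ∑ ξ, ∑ k, if σ ξ = proj (β k) then P ξ else 0 := Finset.sum_comm
      _ ≤ ∑ ξ, P ξ := Finset.sum_le_sum fun ξ _ => hcount ξ
      _ = 1 := hPsum
  exact absurd hsum hle.not_gt

end

end EPR
end

section
/- Let ρ be a bipartite state on ℂ^{dA}⊗ℂ^{dB}. Suppose there is an orthonormal basis {α_a}_{a=1}^{dA} of ℂ^{dA}, unit vectors β_1,…,β_{dA} in ℂ^{dB} that are linearly independent, and p_a > 0 such that Tr_A[ρ(|α_a⟩⟨α_a|⊗I_B)] = p_a|β_a⟩⟨β_a| for every a. If ρ is unsteerable from Alice's side for non-degenerate projective measurements, then ρ = Σ_{a=1}^{dA} p_a |α_a⊗β_a⟩⟨α_a⊗β_a|; in particular ρ is separable. Hence ρ is either separable or steerable. -/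
/-!
Write `⟪x, M, y⟫` for `star x ⬝ᵥ M *ᵥ y`, and let `f a` be vectors of `ℂ^{dB}` dual to the linearly
independent `β a`, so that `⟨f a, β b⟩ = δ_ab`.

*Unsteerability kills the off-diagonal terms.* Applying the hidden-state model to the basis `α`,
`p_c |β_c⟩⟨β_c|` is a nonnegative combination of the `σ ξ`; hence each `σ ξ` of positive weight
annihilates the orthogonal complement of some `β c` (`hidden_state_apply_eq_zero`). For `a ≠ a'` at
least one of `f a`, `f a'` is orthogonal to that `β c`, so `⟪f a, σ ξ, f a'⟫ = 0`. Every unit vector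
`γ` is part of an orthonormal basis, so its conditional state is a combination of the `σ ξ`, whence
`⟪γ ⊗ f a, ρ, γ ⊗ f a'⟫ = 0` for all `γ`; by polarization `⟪x ⊗ f a, ρ, y ⊗ f a'⟫ = 0` for all
`x`, `y`.

*Purity and positivity reduce everything to these terms.* If `v ⊥ β a` then
`⟪α a ⊗ v, ρ, α a ⊗ v⟫ = 0`, so `ρ (α a ⊗ v) = 0` as `ρ ≥ 0`. Since `v - ⟨β a, v⟩ f a ⊥ β a`, this
gives `ρ (α a ⊗ v) = ⟨β a, v⟩ ρ (α a ⊗ f a)`, and so `⟪α a ⊗ v, ρ, α a' ⊗ w⟫ = 0` for `a ≠ a'`.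
For `a = a'` this form is that of the conditional state `p_a |β_a⟩⟨β_a|`. Thus `ρ` and
`∑ p_a |α_a⊗β_a⟩⟨α_a⊗β_a|` have the same form on a spanning set.
-/

open scoped BigOperators Kronecker Classical ComplexOrder

namespace EPR

noncomputable section

open scoped Matrix

/-! ### Forms of rank-one projections, tensor products and conditional states -/

lemma form_proj {ι : Type*} [Fintype ι] (u v w : ι → ℂ) :
    star v ⬝ᵥ proj u *ᵥ w = (star v ⬝ᵥ u) * (star u ⬝ᵥ w) := by
  have hu : proj u = Matrix.vecMulVec u (star u) := rfl
  rw [hu, Matrix.vecMulVec_mulVec, dotProduct_smul]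
  simp

lemma isState_proj {ι : Type*} [Fintype ι] {u : ι → ℂ} (hu : IsUnitVec u) :
    IsState (proj u) := by
  refine ⟨Matrix.posSemidef_vecMulVec_self_star u, ?_⟩
  rw [← hu]
  simp [Matrix.trace, proj, cinner, mul_comm]

lemma proj_tensor2 {dA dB : ℕ} (x : Fin dA → ℂ) (v : Fin dB → ℂ) :
    proj (tensor2 x v) = proj x ⊗ₖ proj v := by
  ext ⟨i, b⟩ ⟨j, b'⟩
  simp [proj, tensor2, Matrix.kroneckerMap_apply]
  ring

lemma star_tensor2_dotProduct {dA dB : ℕ} (x y : Fin dA → ℂ) (v w : Fin dB → ℂ) :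
    star (tensor2 x v) ⬝ᵥ tensor2 y w = (star x ⬝ᵥ y) * (star v ⬝ᵥ w) := by
  simp only [dotProduct, tensor2, Fintype.sum_prod_type, Finset.sum_mul_sum, Pi.star_apply,
    star_mul']
  exact Finset.sum_congr rfl fun i _ => Finset.sum_congr rfl fun j _ => by ring

lemma form_condState {dA dB : ℕ} (ρ : Matrix (Fin dA × Fin dB) (Fin dA × Fin dB) ℂ)
    (γ : Fin dA → ℂ) (v w : Fin dB → ℂ) :
    star v ⬝ᵥ condState ρ γ *ᵥ w = star (tensor2 γ v) ⬝ᵥ ρ *ᵥ tensor2 γ w := by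
  simp only [dotProduct, Matrix.mulVec, condState, Matrix.of_apply, tensor2,
    Fintype.sum_prod_type, Finset.mul_sum, Finset.sum_mul, Pi.star_apply, star_mul']
  calc _ = ∑ b, ∑ i, ∑ b', ∑ j, star (v b) * ((starRingEnd ℂ) (γ i) * γ j *
            ρ (i, b) (j, b') * w b') :=
        Finset.sum_congr rfl fun b _ => Finset.sum_comm
    _ = ∑ i, ∑ b, ∑ b', ∑ j, star (v b) * ((starRingEnd ℂ) (γ i) * γ j *
            ρ (i, b) (j, b') * w b') := Finset.sum_comm
    _ = ∑ i, ∑ b, ∑ j, ∑ b', star (v b) * ((starRingEnd ℂ) (γ i) * γ j *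
            ρ (i, b) (j, b') * w b') :=
        Finset.sum_congr rfl fun i _ => Finset.sum_congr rfl fun b _ => Finset.sum_comm
    _ = _ := by
        refine Finset.sum_congr rfl fun i _ => Finset.sum_congr rfl fun b _ =>
          Finset.sum_congr rfl fun j _ => Finset.sum_congr rfl fun b' _ => ?_
        rw [starRingEnd_apply]
        ring

lemma tensor2_add_left {dA dB : ℕ} (x y : Fin dA → ℂ) (v : Fin dB → ℂ) :
    tensor2 (x + y) v = tensor2 x v + tensor2 y v := by
  ext q; simp [tensor2, add_mul]

lemma tensor2_smul_left {dA dB : ℕ} (c : ℂ) (x : Fin dA → ℂ) (v : Fin dB → ℂ) :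
    tensor2 (c • x) v = c • tensor2 x v := by
  ext q; simp [tensor2, mul_assoc]

lemma tensor2_add_right {dA dB : ℕ} (x : Fin dA → ℂ) (v w : Fin dB → ℂ) :
    tensor2 x (v + w) = tensor2 x v + tensor2 x w := by
  ext q; simp [tensor2, mul_add]

lemma tensor2_smul_right {dA dB : ℕ} (c : ℂ) (x : Fin dA → ℂ) (v : Fin dB → ℂ) :
    tensor2 x (c • v) = c • tensor2 x v := by
  ext q; simp [tensor2]; ring

/-! ### Linear algebra: dual vectors, basis completion, polarization -/

lemma exists_dual_vectors {n d : ℕ} {β : Fin n → Fin d → ℂ} (hind : LinearIndependent ℂ β) :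
    ∃ f : Fin n → Fin d → ℂ, ∀ a b, star (f a) ⬝ᵥ β b = if a = b then 1 else 0 := by
  obtain ⟨g, hg⟩ := LinearMap.exists_leftInverse_of_injective (Fintype.linearCombination ℂ β)
    (LinearMap.ker_eq_bot.2 (linearIndependent_iff_injective_fintypeLinearCombination.1 hind))
  -- `f a` represents the `a`-th coordinate functional of the left inverse `g`
  refine ⟨fun a k => star (g (Pi.single k 1) a), fun a b => ?_⟩
  have h1 : g (β b) = Pi.single b 1 := by
    have := LinearMap.congr_fun hg (Pi.single b 1)
    simpa [Fintype.linearCombination_apply_single] using this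
  have h2 : β b = ∑ k, β b k • (Pi.single k 1 : Fin d → ℂ) := by
    ext k; simp [Finset.sum_apply, Pi.single_apply]
  have h3 : g (β b) a = ∑ k, β b k * g (Pi.single k 1) a := by
    conv_lhs => rw [h2]
    simp only [map_sum, map_smul, Finset.sum_apply, Pi.smul_apply, smul_eq_mul]
  have h4 : star (fun k => star (g (Pi.single k 1) a)) ⬝ᵥ β b = g (β b) a := by
    rw [h3]
    simp [dotProduct, mul_comm]
  rw [h4, h1, Pi.single_apply]

lemma exists_orthonormalFam {d : ℕ} {γ : Fin d → ℂ} (hγ : IsUnitVec γ) :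
    ∃ (α : Fin d → Fin d → ℂ) (i : Fin d), OrthonormalFam α ∧ α i = γ := by
  have inner_eq (x y : EuclideanSpace ℂ (Fin d)) :
      inner ℂ x y = cinner (WithLp.ofLp x) (WithLp.ofLp y) := by
    simp [PiLp.inner_apply, cinner, mul_comm]
  have hd : 0 < d := by
    rcases Nat.eq_zero_or_pos d with rfl | hd
    · simp [IsUnitVec, cinner] at hγ
    · exact hd
  let i : Fin d := ⟨0, hd⟩
  have hv : Orthonormal ℂ (Set.domRestrict {i} fun _ : Fin d => (WithLp.toLp 2 γ)) := by
    rw [orthonormal_iff_ite]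
    rintro ⟨a, rfl⟩ ⟨b, rfl⟩
    rw [inner_eq, if_pos rfl]
    exact hγ
  obtain ⟨b, hb⟩ := hv.exists_orthonormalBasis_extension_of_card_eq (by simp)
  refine ⟨fun a => WithLp.ofLp (b a), i, fun a a' => ?_, ?_⟩
  · rw [← inner_eq, orthonormal_iff_ite.1 b.orthonormal]
  · simp [hb i rfl]

/-- Polarization: a sesquilinear form `x, y ↦ ⟪x ⊗ v, ρ, y ⊗ w⟫` vanishing on the diagonal
vanishes identically. -/
lemma polarize {dA dB : ℕ} {ρ : Matrix (Fin dA × Fin dB) (Fin dA × Fin dB) ℂ}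
    {v w : Fin dB → ℂ}
    (h : ∀ γ, star (tensor2 γ v) ⬝ᵥ ρ *ᵥ tensor2 γ w = 0) (x y : Fin dA → ℂ) :
    star (tensor2 x v) ⬝ᵥ ρ *ᵥ tensor2 y w = 0 := by
  have h1 := h (x + y)
  have h2 := h (x + Complex.I • y)
  simp only [tensor2_add_left, tensor2_smul_left, star_add, star_smul, Matrix.mulVec_add,
    Matrix.mulVec_smul, add_dotProduct, dotProduct_add, smul_dotProduct, dotProduct_smul, h,
    smul_eq_mul, Complex.star_def, Complex.conj_I, mul_zero, zero_add, add_zero] at h1 h2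
  linear_combination (1 / 2) * h1 - (Complex.I / 2) * h2 +
    ((star (tensor2 x v) ⬝ᵥ ρ *ᵥ tensor2 y w - star (tensor2 y v) ⬝ᵥ ρ *ᵥ tensor2 x w) / 2) *
      Complex.I_sq

/-- An orthonormal family of full size is complete, so matrices on `ℂ^{dA} ⊗ ℂ^{dB}` are
determined by their forms on the vectors `α a ⊗ v`. -/
lemma ext_of_form {dA dB : ℕ} {M N : Matrix (Fin dA × Fin dB) (Fin dA × Fin dB) ℂ}
    {α : Fin dA → Fin dA → ℂ} (hα : OrthonormalFam α)
    (h : ∀ a a' v w, star (tensor2 (α a) v) ⬝ᵥ M *ᵥ tensor2 (α a') w =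
      star (tensor2 (α a) v) ⬝ᵥ N *ᵥ tensor2 (α a') w) : M = N := by
  have hU : (Matrix.of fun a i => star (α a i)) * (Matrix.of fun i a => α a i) = 1 := by
    ext a a'
    simpa [Matrix.mul_apply, Matrix.one_apply, cinner] using hα a a'
  have hU' := mul_eq_one_comm.1 hU
  have hexp (i : Fin dA) (b : Fin dB) : (Pi.single (i, b) 1 : Fin dA × Fin dB → ℂ) =
      ∑ a, star (α a i) • tensor2 (α a) (Pi.single b 1) := by
    ext ⟨j, b'⟩
    have := congrFun (congrFun hU' j) i
    simp only [Matrix.mul_apply, Matrix.of_apply, Matrix.one_apply] at this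
    simp only [Finset.sum_apply, Pi.smul_apply, tensor2, smul_eq_mul, ← mul_assoc,
      ← Finset.sum_mul]
    rw [Finset.sum_congr rfl fun a _ => mul_comm (star (α a i)) (α a j), this]
    by_cases h1 : j = i <;> by_cases h2 : b' = b <;> simp [Pi.single_apply, h1, h2]
  ext ⟨i, b⟩ ⟨j, b'⟩
  have entry (K : Matrix (Fin dA × Fin dB) (Fin dA × Fin dB) ℂ) :
      K (i, b) (j, b') = star (Pi.single (i, b) 1 : Fin dA × Fin dB → ℂ) ⬝ᵥ
        K *ᵥ (Pi.single (j, b') 1) := by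
    simp [← Pi.single_star]
  rw [entry M, entry N, hexp, hexp]
  simp only [star_sum, sum_dotProduct, Matrix.mulVec_sum, dotProduct_sum, star_smul,
    smul_dotProduct, Matrix.mulVec_smul, dotProduct_smul, h]

/-! ### Consequences of the hidden-state model -/

/-- If `p |β⟩⟨β|` is a nonnegative combination of positive semidefinite matrices, every member of
positive weight annihilates the orthogonal complement of `β`. -/
lemma hidden_state_apply_eq_zero {d n : ℕ} {σ : Fin n → Matrix (Fin d) (Fin d) ℂ}
    (hσ : ∀ ξ, (σ ξ).PosSemidef) {r : Fin n → ℝ} (hr : ∀ ξ, 0 ≤ r ξ) {p : ℂ} {β : Fin d → ℂ}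
    (h : p • proj β = ∑ ξ, (r ξ : ℂ) • σ ξ) {ξ : Fin n} (hξ : 0 < r ξ) {v : Fin d → ℂ}
    (hv : star β ⬝ᵥ v = 0) : σ ξ *ᵥ v = 0 := by
  rw [← (hσ ξ).dotProduct_mulVec_zero_iff]
  have h0 : ∑ ξ, (r ξ : ℂ) * (star v ⬝ᵥ σ ξ *ᵥ v) = 0 := by
    have := congrArg (fun M => star v ⬝ᵥ M *ᵥ v) h
    simp only [Matrix.smul_mulVec, Matrix.sum_mulVec, dotProduct_smul, dotProduct_sum, form_proj,
      hv, smul_eq_mul, mul_zero] at this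
    exact this.symm
  have h1 := (Finset.sum_eq_zero_iff_of_nonneg fun ξ _ =>
    mul_nonneg (Complex.zero_le_real.2 (hr ξ)) ((hσ ξ).dotProduct_mulVec_nonneg v)).1 h0 ξ
      (Finset.mem_univ ξ)
  exact (mul_eq_zero.1 h1).resolve_left (by exact_mod_cast hξ.ne')

/-- For an unsteerable state steered to the pure states `β a`, the off-diagonal components of every
conditional state with respect to vectors dual to `β` vanish. -/
lemma form_dual_eq_zero {dA dB : ℕ} {ρ : Matrix (Fin dA × Fin dB) (Fin dA × Fin dB) ℂ}
    {α : Fin dA → Fin dA → ℂ} (hα : OrthonormalFam α) {β : Fin dA → Fin dB → ℂ} {p : Fin dA → ℝ}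
    (h : ∀ a, condState ρ (α a) = (p a : ℂ) • proj (β a)) (hun : Unsteerable ρ)
    {f : Fin dA → Fin dB → ℂ} (hf : ∀ a b, star (f a) ⬝ᵥ β b = if a = b then 1 else 0)
    {a a' : Fin dA} (ha : a ≠ a') (γ : Fin dA → ℂ) :
    star (tensor2 γ (f a)) ⬝ᵥ ρ *ᵥ tensor2 γ (f a') = 0 := by
  obtain ⟨n, P, σ, hP, -, hσ, hmod⟩ := hun
  have hβf (b c : Fin dA) (hbc : b ≠ c) : star (β c) ⬝ᵥ f b = 0 := by
    have := congrArg star (hf b c)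
    rwa [if_neg hbc, star_zero, ← Matrix.star_dotProduct_star, star_star] at this
  have key (ξ : Fin n) (hξ : 0 < P ξ) : star (f a) ⬝ᵥ σ ξ *ᵥ f a' = 0 := by
    obtain ⟨Q, hQ, hQ1, hQs⟩ := hmod α hα
    obtain ⟨c, hc⟩ : ∃ c, 0 < Q c ξ := by
      by_contra! hcon
      have := Finset.sum_nonpos fun c (_ : c ∈ Finset.univ) => hcon c
      rw [hQ1] at this
      linarith
    have kill (v : Fin dB → ℂ) (hv : star (β c) ⬝ᵥ v = 0) : σ ξ *ᵥ v = 0 :=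
      hidden_state_apply_eq_zero (fun ξ => (hσ ξ).1) (fun ξ => mul_nonneg (hQ c ξ).1 (hP ξ))
        ((h c).symm.trans (hQs c)) (mul_pos hc hξ) hv
    by_cases hac : a' = c
    · have h1 := kill (f a) (hβf a c (hac ▸ ha))
      have h2 : star (f a) ᵥ* σ ξ = 0 := by
        rw [← (hσ ξ).1.isHermitian.eq, ← Matrix.star_mulVec, h1, star_zero]
      rw [Matrix.dotProduct_mulVec, h2, zero_dotProduct]
    · rw [kill (f a') (hβf a' c hac), dotProduct_zero]
  have unit (γ : Fin dA → ℂ) (hγ : IsUnitVec γ) :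
      star (tensor2 γ (f a)) ⬝ᵥ ρ *ᵥ tensor2 γ (f a') = 0 := by
    obtain ⟨α', i, hα', rfl⟩ := exists_orthonormalFam hγ
    obtain ⟨Q, -, -, hQs⟩ := hmod α' hα'
    rw [← form_condState, hQs]
    simp only [Matrix.smul_mulVec, Matrix.sum_mulVec, dotProduct_smul, dotProduct_sum]
    refine Finset.sum_eq_zero fun ξ _ => ?_
    rcases (hP ξ).eq_or_lt with h0 | h0
    · simp [← h0]
    · rw [key ξ h0, smul_zero]
  by_cases hγ : γ = 0
  · have h0 : tensor2 γ (f a') = 0 := by ext q; simp [tensor2, hγ]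
    rw [h0, Matrix.mulVec_zero, dotProduct_zero]
  -- normalize `γ`, using that `⟨γ, γ⟩` is a positive real number
  have hpos : 0 < star γ ⬝ᵥ γ := Matrix.dotProduct_star_self_pos_iff.2 hγ
  obtain ⟨s, hs, hs'⟩ : ∃ s : ℝ, 0 < s ∧ star γ ⬝ᵥ γ = ((s ^ 2 : ℝ) : ℂ) := by
    rw [Complex.pos_iff] at hpos
    refine ⟨√(star γ ⬝ᵥ γ).re, Real.sqrt_pos.2 hpos.1, ?_⟩
    rw [Real.sq_sqrt hpos.1.le]
    exact Complex.ext (by simp) (by simpa using hpos.2.symm)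
  have hs0 : (s : ℂ) ≠ 0 := by exact_mod_cast hs.ne'
  have hunit : IsUnitVec ((s : ℂ)⁻¹ • γ) := by
    change star ((s : ℂ)⁻¹ • γ) ⬝ᵥ ((s : ℂ)⁻¹ • γ) = 1
    rw [star_smul, smul_dotProduct, dotProduct_smul, hs']
    simp
    field_simp
  have := unit _ hunit
  rw [tensor2_smul_left, tensor2_smul_left, star_smul, smul_dotProduct, Matrix.mulVec_smul,
    dotProduct_smul] at this
  simpa [hs0] using this

/-- if a non-degenerate projective measurement steers Bob's system to
linearly independent pure states, then an unsteerable shared state must equal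
`∑_a p_a |α_a⊗β_a⟩⟨α_a⊗β_a|`, hence be separable. -/
theorem stmt14 {dA dB : ℕ} (ρ : Matrix (Fin dA × Fin dB) (Fin dA × Fin dB) ℂ)
    (hρ : IsState ρ)
    (α : Fin dA → Fin dA → ℂ) (hα : OrthonormalFam α)
    (β : Fin dA → Fin dB → ℂ) (hβ : ∀ a, IsUnitVec (β a))
    (hind : LinearIndependent ℂ β)
    (p : Fin dA → ℝ) (hp : ∀ a, 0 < p a)
    (h : ∀ a, condState ρ (α a) = (p a : ℂ) • proj (β a))
    (hun : Unsteerable ρ) :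
    ρ = (∑ a, ((p a : ℂ)) • proj (tensor2 (α a) (β a))) ∧ Separable ρ := by
  obtain ⟨f, hf⟩ := exists_dual_vectors hind
  have hβf (a : Fin dA) : star (β a) ⬝ᵥ f a = 1 := by
    have := congrArg star (hf a a)
    rwa [if_pos rfl, star_one, ← Matrix.star_dotProduct_star, star_star] at this
  have hαα (a b : Fin dA) : star (α a) ⬝ᵥ α b = if a = b then 1 else 0 := hα a b
  have hdiag (a : Fin dA) (v w : Fin dB → ℂ) :
      star (tensor2 (α a) v) ⬝ᵥ ρ *ᵥ tensor2 (α a) w =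
        p a * ((star v ⬝ᵥ β a) * (star (β a) ⬝ᵥ w)) := by
    rw [← form_condState, h, Matrix.smul_mulVec, dotProduct_smul, form_proj, smul_eq_mul]
  have hker (a : Fin dA) (v : Fin dB → ℂ) (hv : star (β a) ⬝ᵥ v = 0) :
      ρ *ᵥ tensor2 (α a) v = 0 := by
    rw [← hρ.1.dotProduct_mulVec_zero_iff, hdiag, hv, mul_zero, mul_zero]
  have hred (a : Fin dA) (v : Fin dB → ℂ) :
      ρ *ᵥ tensor2 (α a) v = (star (β a) ⬝ᵥ v) • ρ *ᵥ tensor2 (α a) (f a) := by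
    have h0 := hker a (v + (-(star (β a) ⬝ᵥ v)) • f a) (by
      rw [dotProduct_add, dotProduct_smul, hβf, smul_eq_mul]; ring)
    rw [tensor2_add_right, tensor2_smul_right, Matrix.mulVec_add, Matrix.mulVec_smul, neg_smul,
      ← sub_eq_add_neg, sub_eq_zero] at h0
    exact h0
  have hsymm (x y : Fin dA × Fin dB → ℂ) : star x ⬝ᵥ ρ *ᵥ y = star (star y ⬝ᵥ ρ *ᵥ x) := by
    rw [← Matrix.star_dotProduct_star, star_star, Matrix.star_mulVec, hρ.1.isHermitian.eq,
      Matrix.dotProduct_mulVec, dotProduct_comm]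
  have hoff (a a' : Fin dA) (ha : a ≠ a') (v w : Fin dB → ℂ) :
      star (tensor2 (α a) v) ⬝ᵥ ρ *ᵥ tensor2 (α a') w = 0 := by
    rw [hred a' w, dotProduct_smul, hsymm, hred a v, dotProduct_smul,
      polarize (form_dual_eq_zero hα h hun hf ha.symm), smul_zero, star_zero, smul_zero]
  have main : ρ = ∑ a, (p a : ℂ) • proj (tensor2 (α a) (β a)) := by
    refine ext_of_form hα fun a a' v w => ?_
    simp only [Matrix.sum_mulVec, Matrix.smul_mulVec, dotProduct_sum, dotProduct_smul, form_proj,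
      star_tensor2_dotProduct, hαα, smul_eq_mul]
    by_cases ha : a = a'
    · subst ha
      rw [hdiag, Finset.sum_eq_single a (fun b _ hb => by simp [hb]) (by simp)]
      simp
    · rw [hoff a a' ha]
      refine (Finset.sum_eq_zero fun c _ => ?_).symm
      by_cases hac : a = c
      · have : c ≠ a' := hac ▸ ha
        simp [this]
      · simp [hac]
  refine ⟨main, dA, p, fun a => proj (α a), fun a => proj (β a), fun a => (hp a).le,
    fun a => isState_proj ((hα a a).trans (if_pos rfl)), fun a => isState_proj (hβ a), ?_⟩
  simpa only [proj_tensor2] using main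

end

end EPR
end
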